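/- Let S^{k,n-k} = (S^k × S^{n-k})/Z₂ be the quotient of a product of spheres by the simultaneous antipodal involution (x, y) ↦ (-x, -y), with 0 ≤ k ≤ n - k. Then the sum of the Z/2-Betti numbers of S^{k,n-k} equals 2(k + 1) when k < n - k, and equals 2(k+1) for k = n-k as well; in particular SB(S^{0,n}, Z/2) = 2. -/

import Mathlib

/-!
Let `Y` be the sphere `S^l`. The Betti numbers modulo `2` of `S^{k,l}` satisfy

* an upper bound: since `(S^{k+1} × Y) / ±1` is covered by a neighbourhood
  `(S^k × (-1, 1) × Y) / ±1` of `S^{k,l}` and by the complement of `S^{k,l}`, which is an open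
  hemisphere times `Y`, the Mayer–Vietoris sequence gives
  `b_i(S^{k+1,l}) ≤ b_i(S^{k,l}) + b_{i-k-1}(Y)` and therefore
  `b_i(S^{k,l}) ≤ ∑_{j ≤ k} b_{i-j}(Y)`;
* an identity: the double cover `E = S^k × S^l → S^{k,l}` has a transfer sequence
  `⋯ → H_{i+1}(S^{k,l}) → H_i(S^{k,l}) → H_i(E) → H_i(S^{k,l}) → ⋯`, so the ranks `r_i` of its
  connecting maps satisfy `b_i(E) + r_i + r_{i+1} = 2 b_i(S^{k,l})`.

If equality held in the upper bound for all `i`, the identity would determine ranks `ρ_i` with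
`ρ_i ≤ 1`, as `k ≤ l`. By induction `r_i = ρ_i`: the identity shows that `ρ_{i+1} - r_{i+1}` is
twice the defect of the upper bound at `i`, so that both vanish.

Spheres are replaced throughout by punctured vector spaces, which are oddly homotopy equivalent to
them. The Mayer–Vietoris sequence itself follows from barycentric subdivision.
-/

open CategoryTheory AlgebraicTopology

/-- The singular chain complex of a topological space with `ℤ/2` coefficients. -/
noncomputable def singularChainComplex (X : TopCat) : ChainComplex (ModuleCat (ZMod 2)) ℕ :=
  (AlgebraicTopology.alternatingFaceMapComplex (ModuleCat (ZMod 2))).obj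
    (((SimplicialObject.whiskering _ _).obj (ModuleCat.free (ZMod 2))).obj (TopCat.toSSet.obj X))

/-- The `i`-th singular homology of `X` with `ℤ/2` coefficients. -/
noncomputable def singularHomology (X : TopCat) (i : ℕ) : ModuleCat (ZMod 2) :=
  (singularChainComplex X).homology i

/-- The `i`-th `ℤ/2`-Betti number of `X`. -/
noncomputable def betti (X : TopCat) (i : ℕ) : ℕ :=
  Module.finrank (ZMod 2) (singularHomology X i)

/-- The space `S^{k,n-k} = (S^k × S^{n-k})/ℤ₂`, the quotient of a product of round spheres
by the simultaneous antipodal involution `(x, y) ↦ (-x, -y)`. -/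
noncomputable def Skl (k l : ℕ) : TopCat :=
  TopCat.of (Quotient (α := Metric.sphere (0 : EuclideanSpace ℝ (Fin (k + 1))) 1 ×
      Metric.sphere (0 : EuclideanSpace ℝ (Fin (l + 1))) 1)
    { r := fun p q =>
        ((p.1 : EuclideanSpace ℝ (Fin (k + 1))) = q.1 ∧
          (p.2 : EuclideanSpace ℝ (Fin (l + 1))) = q.2) ∨
        ((p.1 : EuclideanSpace ℝ (Fin (k + 1))) = -(q.1 : EuclideanSpace ℝ (Fin (k + 1))) ∧
          (p.2 : EuclideanSpace ℝ (Fin (l + 1))) = -(q.2 : EuclideanSpace ℝ (Fin (l + 1))))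
      iseqv := by
        constructor
        · intro p; left; exact ⟨rfl, rfl⟩
        · rintro p q (⟨h₁, h₂⟩ | ⟨h₁, h₂⟩)
          · left; exact ⟨h₁.symm, h₂.symm⟩
          · right; constructor <;> [rw [h₁]; rw [h₂]] <;> simp
        · rintro p q r (⟨h₁, h₂⟩ | ⟨h₁, h₂⟩) (⟨g₁, g₂⟩ | ⟨g₁, g₂⟩)
          · left; exact ⟨h₁.trans g₁, h₂.trans g₂⟩
          · right; exact ⟨by rw [h₁, g₁], by rw [h₂, g₂]⟩
          · right; exact ⟨by rw [h₁, g₁], by rw [h₂, g₂]⟩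
          · left; exact ⟨by rw [h₁, g₁]; simp, by rw [h₂, g₂]; simp⟩ })

namespace SingularBetti

open Simplicial Opposite Limits HomologicalComplex

universe u

section HomologicalAlgebra

variable {C : Type*} [Category* C] [Abelian C]

lemma shortExact_of_isPushout {X Y Z W : C} {f : X ⟶ Y} {g : X ⟶ Z} {i : Y ⟶ W} {j : Z ⟶ W}
    [Mono f] (h : IsPushout f g i j) :
    (ShortComplex.mk (biprod.lift f (-g)) (biprod.desc i j) (by simp [h.w])).ShortExact where
  exact := ShortComplex.exact_of_g_is_cokernel _ h.isColimitCokernelCofork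
  mono_f := mono_of_mono_fac (h := f) (biprod.lift_fst f (-g))
  epi_g := h.epi_shortComplex_g

end HomologicalAlgebra

section ModuleComplexes

variable {R : Type u} [Ring R] {K L : ChainComplex (ModuleCat.{u} R) ℕ}

lemma hom_comm_apply (f : K ⟶ L) (i j : ℕ) (x : K.X i) :
    L.d i j (f.f i x) = f.f j (K.d i j x) :=
  ConcreteCategory.congr_hom (f.comm i j) x

lemma quasiIso_of_acyclic {S : ShortComplex (ChainComplex (ModuleCat.{u} R) ℕ)}
    (hS : S.ShortExact) (h : S.X₃.Acyclic) : QuasiIso S.f := by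
  have hz (n : ℕ) : IsZero (S.X₃.homology n) := (exactAt_iff_isZero_homology _ _).1 (h n)
  refine ⟨fun n ↦ (quasiIsoAt_iff_isIso_homologyMap _ _).2 ?_⟩
  have : Mono (homologyMap S.f n) :=
    (hS.homology_exact₁ (n + 1) n rfl).mono_g ((hz _).eq_of_src _ _)
  have : Epi (homologyMap S.f n) := (hS.homology_exact₂ n).epi_f ((hz _).eq_of_tgt _ _)
  exact isIso_of_mono_of_epi _

lemma quasiIso_of_mono (f : K ⟶ L) [Mono f]
    (h : ∀ n (c : L.X n), (∀ m, L.d n m c ∈ LinearMap.range (f.f m).hom) →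
      ∃ y : L.X (n + 1), c - L.d (n + 1) n y ∈ LinearMap.range (f.f n).hom) : QuasiIso f := by
  have hS : (ShortComplex.mk f (cokernel.π f) (cokernel.condition f)).ShortExact :=
    { exact := ShortComplex.exact_cokernel f }
  have range_eq_ker (n : ℕ) :
      LinearMap.range (f.f n).hom = LinearMap.ker ((cokernel.π f).f n).hom :=
    (hS.exact.map (eval _ _ n)).moduleCat_range_eq_ker
  refine quasiIso_of_acyclic hS fun n ↦ ?_
  rw [exactAt_iff' _ (n + 1) n _ (by simp) rfl, ShortComplex.moduleCat_exact_iff]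
  intro z hz
  obtain ⟨c, rfl⟩ := (ModuleCat.epi_iff_surjective ((cokernel.π f).f n)).1 inferInstance z
  obtain ⟨y, hy⟩ := h n c fun m ↦ by
    rw [range_eq_ker, LinearMap.mem_ker]
    by_cases hm : (ComplexShape.down ℕ).next n = m
    · subst hm
      exact (hom_comm_apply (cokernel.π f) _ _ c).symm.trans hz
    · rw [L.shape _ _ fun hr ↦ hm ((ComplexShape.down ℕ).next_eq' hr)]
      exact map_zero _
  rw [range_eq_ker, LinearMap.mem_ker, map_sub, sub_eq_zero] at hy
  exact ⟨(cokernel.π f).f (n + 1) y, (hom_comm_apply (cokernel.π f) _ _ y).trans hy.symm⟩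

/-- The linear map induced on homology by a chain map. -/
noncomputable def homologyLin (f : K ⟶ L) (n : ℕ) : K.homology n →ₗ[R] L.homology n :=
  (homologyMap f n).hom

@[simp]
lemma homologyLin_id (n : ℕ) : homologyLin (𝟙 K) n = LinearMap.id := by
  simp [homologyLin]

lemma homologyLin_comp {M : ChainComplex (ModuleCat.{u} R) ℕ} (f : K ⟶ L) (g : L ⟶ M) (n : ℕ) :
    homologyLin (f ≫ g) n = homologyLin g n ∘ₗ homologyLin f n := by
  simp [homologyLin, homologyMap_comp]

@[simp]
lemma homologyLin_add (f g : K ⟶ L) (n : ℕ) :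
    homologyLin (f + g) n = homologyLin f n + homologyLin g n := by
  simp [homologyLin, homologyMap_add]

@[simp]
lemma homologyLin_neg (f : K ⟶ L) (n : ℕ) : homologyLin (-f) n = -homologyLin f n := by
  simp [homologyLin, homologyMap_neg]

@[simp]
lemma homologyLin_zero (n : ℕ) : homologyLin (0 : K ⟶ L) n = 0 := by
  simp [homologyLin]

lemma homologyLin_bijective (f : K ⟶ L) [QuasiIso f] (n : ℕ) :
    Function.Bijective (homologyLin f n) :=
  ConcreteCategory.bijective_of_isIso (homologyMap f n)

variable (K L) in
/-- Homology commutes with binary biproducts. -/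
noncomputable def homologyBiprodEquiv (n : ℕ) :
    (K ⊞ L).homology n ≃ₗ[R] K.homology n × L.homology n :=
  .ofLinearMap ((homologyLin biprod.fst n).prod (homologyLin biprod.snd n))
    ((homologyLin biprod.inl n).coprod (homologyLin biprod.inr n))
    (by
      simp only [LinearMap.prod_comp, LinearMap.comp_coprod, ← homologyLin_comp, biprod.inl_fst,
        biprod.inr_fst, biprod.inl_snd, biprod.inr_snd, homologyLin_id, homologyLin_zero]
      ext <;> simp)
    (by simp [LinearMap.coprod_comp_prod, ← homologyLin_comp, ← homologyLin_add])

lemma exists_connecting_map {M : ChainComplex (ModuleCat.{u} R) ℕ} {f : K ⟶ L} {g : L ⟶ M}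
    {w : f ≫ g = 0} (hS : (ShortComplex.mk f g w).ShortExact) :
    ∃ δ : ∀ n, M.homology (n + 1) →ₗ[R] K.homology n,
      (∀ n, Function.Exact (homologyLin g (n + 1)) (δ n)) ∧
      (∀ n, Function.Exact (δ n) (homologyLin f n)) ∧
      (∀ n, Function.Exact (homologyLin f n) (homologyLin g n)) ∧
      Function.Surjective (homologyLin g 0) := by
  refine ⟨fun n ↦ (hS.δ (n + 1) n (by simp)).hom, fun n ↦ ?_, fun n ↦ ?_, fun n ↦ ?_, ?_⟩
  · exact LinearMap.exact_iff.2 (hS.homology_exact₃ (n + 1) n (by simp)).moduleCat_range_eq_ker.symm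
  · exact LinearMap.exact_iff.2 (hS.homology_exact₁ (n + 1) n (by simp)).moduleCat_range_eq_ker.symm
  · exact LinearMap.exact_iff.2 (hS.homology_exact₂ n).moduleCat_range_eq_ker.symm
  · have := hS.epi_g
    exact (ModuleCat.epi_iff_surjective _).1 (epi_homologyMap_of_epi_of_not_rel g 0 (by simp))

end ModuleComplexes

section MayerVietoris

variable {R : Type*} [Ring R] {P U V W : ℕ → Type*}
  [∀ n, AddCommGroup (P n)] [∀ n, Module R (P n)] [∀ n, AddCommGroup (U n)] [∀ n, Module R (U n)]
  [∀ n, AddCommGroup (V n)] [∀ n, Module R (V n)] [∀ n, AddCommGroup (W n)] [∀ n, Module R (W n)]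

/-- The maps `a, b, i, j` fit, for a suitable connecting map `δ`, into a Mayer–Vietoris sequence
`⋯ → W (n + 1) → P n → U n × V n → W n → ⋯ → U 0 × V 0 → W 0 → 0`. -/
def IsMayerVietoris (a : ∀ n, P n →ₗ[R] U n) (b : ∀ n, P n →ₗ[R] V n)
    (i : ∀ n, U n →ₗ[R] W n) (j : ∀ n, V n →ₗ[R] W n) : Prop :=
  ∃ δ : ∀ n, W (n + 1) →ₗ[R] P n,
    (∀ n, Function.Exact ((i (n + 1)).coprod (j (n + 1))) (δ n)) ∧
    (∀ n, Function.Exact (δ n) ((a n).prod (-b n))) ∧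
    (∀ n, Function.Exact ((a n).prod (-b n)) ((i n).coprod (j n))) ∧
    Function.Surjective ((i 0).coprod (j 0))

end MayerVietoris

section

variable {R : Type u} [Ring R] {P U V W W' : ChainComplex (ModuleCat.{u} R) ℕ}
  {a : P ⟶ U} {b : P ⟶ V} {i : U ⟶ W} {j : V ⟶ W}

lemma isMayerVietoris_of_isPushout [Mono a] (h : IsPushout a b i j) :
    IsMayerVietoris (homologyLin a) (homologyLin b) (homologyLin i) (homologyLin j) := by
  obtain ⟨δ, h₁, h₂, h₃, h₄⟩ := exists_connecting_map (shortExact_of_isPushout h)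
  let e := homologyBiprodEquiv U V
  have hf (n : ℕ) : (homologyLin a n).prod (-homologyLin b n) =
      (e n).toLinearMap ∘ₗ homologyLin (biprod.lift a (-b)) n := by
    change _ = (LinearMap.prod _ _) ∘ₗ _
    simp [LinearMap.prod_comp, ← homologyLin_comp]
  have hg (n : ℕ) : (homologyLin i n).coprod (homologyLin j n) =
      homologyLin (biprod.desc i j) n ∘ₗ (e n).symm.toLinearMap := by
    change _ = _ ∘ₗ (LinearMap.coprod _ _)
    simp [LinearMap.comp_coprod, ← homologyLin_comp]
  refine ⟨δ, fun n ↦ ?_, fun n ↦ ?_, fun n ↦ ?_, ?_⟩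
  · rw [hg, LinearEquiv.precomp_exact_iff_exact]
    exact h₁ n
  · rw [hf, LinearEquiv.postcomp_exact_iff_exact]
    exact h₂ n
  · rw [hf, hg, LinearEquiv.conj_exact_iff_exact]
    exact h₃ n
  · rw [hg, LinearMap.coe_comp]
    exact h₄.comp (e 0).symm.surjective

lemma IsMayerVietoris.comp_quasiIso
    (h : IsMayerVietoris (homologyLin a) (homologyLin b) (homologyLin i) (homologyLin j))
    (q : W ⟶ W') [QuasiIso q] :
    IsMayerVietoris (homologyLin a) (homologyLin b) (homologyLin (i ≫ q))
      (homologyLin (j ≫ q)) := by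
  obtain ⟨δ, h₁, h₂, h₃, h₄⟩ := h
  let e (n : ℕ) : W.homology n ≃ₗ[R] W'.homology n := .ofBijective _ (homologyLin_bijective q n)
  have hq (n : ℕ) : (homologyLin (i ≫ q) n).coprod (homologyLin (j ≫ q) n) =
      (e n).toLinearMap ∘ₗ (homologyLin i n).coprod (homologyLin j n) := by
    simp only [homologyLin_comp, LinearMap.comp_coprod]
    rfl
  refine ⟨fun n ↦ δ n ∘ₗ (e (n + 1)).symm.toLinearMap, fun n ↦ ?_, fun n ↦ ?_, fun n ↦ ?_, ?_⟩
  · rw [hq, LinearEquiv.conj_exact_iff_exact]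
    exact h₁ n
  · rw [LinearEquiv.precomp_exact_iff_exact]
    exact h₂ n
  · rw [hq, LinearEquiv.postcomp_exact_iff_exact]
    exact h₃ n
  · rw [hq, LinearMap.coe_comp]
    exact (e 0).surjective.comp h₄

end

section Chains

variable (R : Type) [Ring R]

/-- The chain complex functor on simplicial sets: free `R`-modules on simplices, with the
alternating sum of the faces as boundary. -/
noncomputable def chains : SSet.{0} ⥤ ChainComplex (ModuleCat.{0} R) ℕ :=
  (SimplicialObject.whiskering _ _).obj (ModuleCat.free R) ⋙ alternatingFaceMapComplex _

instance : PreservesColimitsOfShape WalkingSpan (chains R) :=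
  preservesColimitsOfShape_of_eval _ fun n ↦
    have := (ModuleCat.adj R).leftAdjoint_preservesColimits
    inferInstanceAs (PreservesColimitsOfShape WalkingSpan
      ((evaluation _ _).obj (op ⦋n⦌) ⋙ ModuleCat.free R))

instance {X Y : SSet.{0}} (f : X ⟶ Y) [Mono f] : Mono ((chains R).map f) := by
  have (n : ℕ) : Mono (((chains R).map f).f n) := (ModuleCat.mono_iff_injective _).2
    (Finsupp.mapDomain_injective ((mono_iff_injective (f.app (op ⦋n⦌))).1 inferInstance))
  exact mono_of_mono_f _ inferInstance

variable {R}

lemma homologyLin_chains_eq_of_homotopy {X Y : SSet.{0}} {f g : X ⟶ Y} (H : SSet.Homotopy f g)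
    (n : ℕ) : homologyLin ((chains R).map f) n = homologyLin ((chains R).map g) n :=
  congrArg _ (Homotopy.homologyMap_eq (SimplicialObject.Homotopy.toChainHomotopy
    (H.toSimplicialObjectHomotopy.whiskerRight (ModuleCat.free R))) n)

lemma isMayerVietoris_chains {P U V W : SSet.{0}} {a : P ⟶ U} {b : P ⟶ V} {i : U ⟶ W} {j : V ⟶ W}
    [Mono a] (h : IsPushout a b i j) :
    IsMayerVietoris (homologyLin ((chains R).map a)) (homologyLin ((chains R).map b))
      (homologyLin ((chains R).map i)) (homologyLin ((chains R).map j)) :=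
  isMayerVietoris_of_isPushout (h.map (chains R))

variable (R) in
/-- The module of `n`-chains of a simplicial set. -/
noncomputable abbrev Chain (X : SSet.{0}) (n : ℕ) : ModuleCat.{0} R := ((chains R).obj X).X n

variable (R) in
/-- The boundary operator on chains, as a linear map. -/
noncomputable def boundary (X : SSet.{0}) (n : ℕ) : Chain R X (n + 1) →ₗ[R] Chain R X n :=
  (((chains R).obj X).d (n + 1) n).hom

variable (R) in
/-- The linear map on chains induced by a map of simplicial sets. -/
noncomputable def chainMap {X Y : SSet.{0}} (f : X ⟶ Y) (n : ℕ) : Chain R X n →ₗ[R] Chain R Y n :=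
  (((chains R).map f).f n).hom

variable {X Y : SSet.{0}} {n : ℕ}

variable (R) in
/-- A simplex as a basis element of the module of chains. -/
noncomputable def basisChain (x : X _⦋n⦌) : Chain R X n :=
  ModuleCat.freeMk x

lemma chain_hom_ext {M : Type*} [AddCommGroup M] [Module R M]
    {f g : Chain R X n →ₗ[R] M} (h : ∀ x, f (basisChain R x) = g (basisChain R x)) : f = g :=
  Finsupp.lhom_ext' fun x ↦ LinearMap.ext_ring (h x)

/-- The linear map on chains with prescribed values on simplices. -/
noncomputable def chainLift {M : ModuleCat.{0} R} (φ : X _⦋n⦌ → M) : Chain R X n →ₗ[R] M :=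
  (ModuleCat.freeDesc (↾φ)).hom

@[simp]
lemma chainLift_basisChain {M : ModuleCat.{0} R} (φ : X _⦋n⦌ → M) (x : X _⦋n⦌) :
    chainLift φ (basisChain R x) = φ x :=
  ModuleCat.freeDesc_apply _ _

@[simp]
lemma chainMap_basisChain (f : X ⟶ Y) (x : X _⦋n⦌) :
    chainMap R f n (basisChain R x) = basisChain R (f.app _ x) :=
  ModuleCat.free_map_apply _ _

lemma boundary_basisChain (x : X _⦋n + 1⦌) :
    boundary R X n (basisChain R x) =
      ∑ i : Fin (n + 2), (-1 : ℤ) ^ (i : ℕ) • basisChain R (X.δ i x) := by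
  have hd : ((chains R).obj X).d (n + 1) n = ∑ i : Fin (n + 2), (-1 : ℤ) ^ (i : ℕ) •
      (ModuleCat.free R).map (X.δ i) := alternatingFaceMapComplex_obj_d _ _
  have hs := (congrArg ModuleCat.Hom.hom hd).trans
    (ModuleCat.hom_sum (M := Chain R X (n + 1)) (N := Chain R X n) _ _)
  refine (LinearMap.congr_fun hs (basisChain R x)).trans ((LinearMap.sum_apply _ _ _).trans ?_)
  exact Finset.sum_congr rfl fun i _ ↦
    congrArg ((-1 : ℤ) ^ (i : ℕ) • ·) (ModuleCat.free_map_apply (X.δ i) x)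

lemma boundary_comp_boundary : boundary R X n ∘ₗ boundary R X (n + 1) = 0 :=
  congrArg ModuleCat.Hom.hom (((chains R).obj X).d_comp_d (n + 2) (n + 1) n)

lemma boundary_comp_chainMap (f : X ⟶ Y) :
    boundary R Y n ∘ₗ chainMap R f (n + 1) = chainMap R f n ∘ₗ boundary R X n :=
  congrArg ModuleCat.Hom.hom (((chains R).map f).comm (n + 1) n)

end Chains

section ChainsIn

variable {R : Type} [Ring R] {X Y : SSet.{0}} {n m : ℕ}

variable (R) in
/-- The chains supported on a set of simplices. -/
noncomputable def chainsIn (s : Set (X _⦋n⦌)) : Submodule R (Chain R X n) :=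
  Submodule.span R (basisChain R '' s)

lemma basisChain_mem_chainsIn {s : Set (X _⦋n⦌)} {x : X _⦋n⦌} (hx : x ∈ s) :
    basisChain R x ∈ chainsIn R s :=
  Submodule.subset_span ⟨x, hx, rfl⟩

lemma chainsIn_le_comap {s : Set (X _⦋n⦌)} {t : Set (Y _⦋m⦌)} (f : Chain R X n →ₗ[R] Chain R Y m)
    (h : ∀ x ∈ s, f (basisChain R x) ∈ chainsIn R t) : chainsIn R s ≤ (chainsIn R t).comap f :=
  Submodule.span_le.2 (Set.forall_mem_image.2 h)

lemma chainsIn_mono {s t : Set (X _⦋n⦌)} (h : s ⊆ t) : chainsIn R s ≤ chainsIn R t :=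
  Submodule.span_mono (Set.image_mono h)

lemma chainsIn_univ : chainsIn R (Set.univ : Set (X _⦋n⦌)) = ⊤ := by
  have h : (chainsIn R (Set.univ : Set (X _⦋n⦌))).mkQ = 0 := chain_hom_ext fun x ↦
    (Submodule.Quotient.mk_eq_zero _).2 (basisChain_mem_chainsIn (Set.mem_univ x))
  rw [← Submodule.ker_mkQ (chainsIn R _), h, LinearMap.ker_zero]

lemma range_chainMap (f : X ⟶ Y) :
    LinearMap.range (chainMap R f n) = chainsIn R (Set.range (f.app (op ⦋n⦌))) := by
  rw [LinearMap.range_eq_map, ← chainsIn_univ, chainsIn, chainsIn, Submodule.map_span,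
    Set.image_image, Set.image_univ, ← Set.range_comp]
  simp only [chainMap_basisChain]
  rfl

end ChainsIn

section Tuples

/-- The simplicial set whose `n`-simplices are the `(n + 1)`-tuples of elements of `E`. -/
def tuples (E : Type) : SSet.{0} where
  obj n := Fin (n.unop.len + 1) → E
  map θ := ↾(· ∘ θ.unop.toOrderHom)

/-- The map of simplicial sets applying a function to all entries of a tuple. -/
def tuplesMap {E E' : Type} (f : E → E') : tuples E ⟶ tuples E' where
  app n := ↾(f ∘ ·)

variable (R : Type) [Ring R] {E E' : Type} {n : ℕ}

/-- A tuple as a basis chain. -/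
noncomputable abbrev tupleChain (v : Fin (n + 1) → E) : Chain R (tuples E) n :=
  basisChain R (X := tuples E) v

variable {R}

lemma chainMap_tupleChain (f : E → E') (v : Fin (n + 1) → E) :
    chainMap R (tuplesMap f) n (tupleChain R v) = tupleChain R (f ∘ v) :=
  chainMap_basisChain _ _

lemma boundary_tupleChain (v : Fin (n + 2) → E) :
    boundary R (tuples E) n (tupleChain R v) =
      ∑ i : Fin (n + 2), (-1 : ℤ) ^ (i : ℕ) • tupleChain R (v ∘ i.succAbove) :=
  boundary_basisChain _

lemma boundary_boundary_tupleChain (v : Fin (n + 3) → E) :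
    boundary R (tuples E) n (boundary R (tuples E) (n + 1) (tupleChain R v)) = 0 :=
  LinearMap.congr_fun boundary_comp_boundary _

lemma tuple_hom_ext {M : Type*} [AddCommGroup M] [Module R M]
    {f g : Chain R (tuples E) n →ₗ[R] M}
    (h : ∀ v : Fin (n + 1) → E, f (tupleChain R v) = g (tupleChain R v)) : f = g :=
  chain_hom_ext h

variable (R) in
/-- The cone with apex `b` over chains of tuples. -/
noncomputable def cone (b : E) (n : ℕ) : Chain R (tuples E) n →ₗ[R] Chain R (tuples E) (n + 1) :=
  chainLift fun v ↦ tupleChain R (Fin.cons b v : Fin (n + 2) → E)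

lemma cone_tupleChain (b : E) (v : Fin (n + 1) → E) :
    cone R b n (tupleChain R v) = tupleChain R (Fin.cons b v : Fin (n + 2) → E) :=
  chainLift_basisChain _ _

lemma boundary_comp_cone (b : E) :
    boundary R _ (n + 1) ∘ₗ cone R b (n + 1) = LinearMap.id - cone R b n ∘ₗ boundary R _ n := by
  refine tuple_hom_ext fun v ↦ ?_
  simp only [LinearMap.comp_apply, LinearMap.sub_apply, LinearMap.id_apply]
  rw [cone_tupleChain, boundary_tupleChain, boundary_tupleChain, Fin.sum_univ_succ, map_sum,
    sub_eq_add_neg, ← Finset.sum_neg_distrib]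
  congr 1
  · simp [Function.comp_def]
  · refine Finset.sum_congr rfl fun i _ ↦ ?_
    have hcons : (Fin.cons b v : Fin (n + 3) → E) ∘ i.succ.succAbove =
        (Fin.cons b (v ∘ i.succAbove) : Fin (n + 2) → E) := by
      ext j
      cases j using Fin.cases <;> simp
    rw [map_zsmul, cone_tupleChain, hcons, Fin.val_succ, pow_succ, mul_neg_one, neg_smul]

lemma boundary_cone_zero (b : E) (v : Fin 1 → E) :
    boundary R _ 0 (cone R b 0 (tupleChain R v)) =
      tupleChain R v - tupleChain R (fun _ : Fin 1 ↦ b) := by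
  have hcons : (Fin.cons b v : Fin 2 → E) ∘ (1 : Fin 2).succAbove = fun _ : Fin 1 ↦ b := by
    ext j
    rw [Fin.fin_one_eq_zero j]
    rfl
  rw [cone_tupleChain, boundary_tupleChain, Fin.sum_univ_two, hcons]
  simp [Function.comp_def, sub_eq_add_neg]

lemma chainMap_comp_cone (f : E → E') (b : E) :
    chainMap R (tuplesMap f) (n + 1) ∘ₗ cone R b n =
      cone R (f b) n ∘ₗ chainMap R (tuplesMap f) n := by
  refine tuple_hom_ext fun v ↦ ?_
  rw [LinearMap.comp_apply, LinearMap.comp_apply, cone_tupleChain, chainMap_tupleChain,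
    chainMap_tupleChain, cone_tupleChain, Fin.comp_cons]

lemma boundary_cone_boundary_tupleChain (b : E) (v : Fin 2 → E) :
    boundary R _ 0 (cone R b 0 (boundary R _ 0 (tupleChain R v))) =
      boundary R _ 0 (tupleChain R v) := by
  simp [boundary_tupleChain, Fin.sum_univ_two, boundary_cone_zero, ← sub_eq_add_neg]

variable (R) (β : ∀ n : ℕ, (Fin (n + 1) → E) → E)

/-- The subdivision of chains of tuples, with `β n v` as the barycentre of the `n`-simplex `v`. -/
noncomputable def tupleSubdiv (n : ℕ) : Chain R (tuples E) n →ₗ[R] Chain R (tuples E) n :=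
  match n with
  | 0 => LinearMap.id
  | n + 1 => chainLift fun v ↦
      cone R (β (n + 1) v) n (tupleSubdiv n (boundary R _ n (tupleChain R v)))

/-- The chain homotopy between the identity and the subdivision of chains of tuples. -/
noncomputable def tupleSubdivHomotopy (n : ℕ) :
    Chain R (tuples E) n →ₗ[R] Chain R (tuples E) (n + 1) :=
  match n with
  | 0 => 0
  | n + 1 => chainLift fun v ↦ cone R (β (n + 1) v) (n + 1)
      (tupleChain R v - tupleSubdivHomotopy n (boundary R _ n (tupleChain R v)))

variable {R}

lemma tupleSubdiv_succ (v : Fin (n + 2) → E) :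
    tupleSubdiv R β (n + 1) (tupleChain R v) =
      cone R (β (n + 1) v) n (tupleSubdiv R β n (boundary R _ n (tupleChain R v))) :=
  chainLift_basisChain _ _

lemma tupleSubdivHomotopy_succ (v : Fin (n + 2) → E) :
    tupleSubdivHomotopy R β (n + 1) (tupleChain R v) = cone R (β (n + 1) v) (n + 1)
      (tupleChain R v - tupleSubdivHomotopy R β n (boundary R _ n (tupleChain R v))) :=
  chainLift_basisChain _ _

lemma boundary_comp_tupleSubdiv (n : ℕ) :
    boundary R _ n ∘ₗ tupleSubdiv R β (n + 1) = tupleSubdiv R β n ∘ₗ boundary R _ n := by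
  induction n with
  | zero =>
    refine tuple_hom_ext fun v ↦ ?_
    simp only [LinearMap.comp_apply, tupleSubdiv_succ]
    exact boundary_cone_boundary_tupleChain _ v
  | succ n ih =>
    refine tuple_hom_ext fun v ↦ ?_
    have hcone := LinearMap.congr_fun (boundary_comp_cone (β (n + 2) v))
      (tupleSubdiv R β (n + 1) (boundary R _ (n + 1) (tupleChain R v)))
    have hdd := LinearMap.congr_fun ih (boundary R _ (n + 1) (tupleChain R v))
    simp only [LinearMap.comp_apply, LinearMap.sub_apply, LinearMap.id_apply,
      boundary_boundary_tupleChain, map_zero] at hcone hdd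
    rw [LinearMap.comp_apply, tupleSubdiv_succ, hcone, hdd, map_zero, sub_zero]
    rfl

lemma boundary_comp_tupleSubdivHomotopy (n : ℕ) :
    boundary R _ (n + 1) ∘ₗ tupleSubdivHomotopy R β (n + 1) =
      LinearMap.id - tupleSubdiv R β (n + 1) - tupleSubdivHomotopy R β n ∘ₗ boundary R _ n := by
  have hcone (n : ℕ) (v : Fin (n + 2) → E) := LinearMap.congr_fun
    (boundary_comp_cone (R := R) (β (n + 1) v))
      (tupleChain R v - tupleSubdivHomotopy R β n (boundary R _ n (tupleChain R v)))
  simp only [LinearMap.comp_apply, LinearMap.sub_apply, LinearMap.id_apply] at hcone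
  induction n with
  | zero =>
    refine tuple_hom_ext fun v ↦ ?_
    simp only [LinearMap.comp_apply, LinearMap.sub_apply, LinearMap.id_apply,
      tupleSubdivHomotopy_succ, hcone, tupleSubdiv_succ]
    simp [tupleSubdivHomotopy, tupleSubdiv]
  | succ n ih =>
    refine tuple_hom_ext fun v ↦ ?_
    have ih' := LinearMap.congr_fun ih (boundary R _ (n + 1) (tupleChain R v))
    simp only [LinearMap.comp_apply, LinearMap.sub_apply, LinearMap.id_apply,
      boundary_boundary_tupleChain, map_zero, sub_zero] at ih'
    simp only [LinearMap.comp_apply, LinearMap.sub_apply, LinearMap.id_apply,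
      tupleSubdivHomotopy_succ β v, hcone, tupleSubdiv_succ, map_sub (boundary R _ (n + 1)), ih',
      sub_sub_cancel, sub_right_comm]

variable {β} {β' : ∀ n : ℕ, (Fin (n + 1) → E') → E'} {f : E → E'}

lemma chainMap_comp_tupleSubdiv (hf : ∀ n v, β' n (f ∘ v) = f (β n v)) (n : ℕ) :
    chainMap R (tuplesMap f) n ∘ₗ tupleSubdiv R β n =
      tupleSubdiv R β' n ∘ₗ chainMap R (tuplesMap f) n := by
  induction n with
  | zero => rfl
  | succ n ih =>
    refine tuple_hom_ext fun v ↦ ?_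
    have hcone := LinearMap.congr_fun (chainMap_comp_cone (R := R) (n := n) f (β (n + 1) v))
    have hbd := LinearMap.congr_fun (boundary_comp_chainMap (R := R) (n := n) (tuplesMap f))
    have ih := LinearMap.congr_fun ih
    simp only [LinearMap.comp_apply] at hcone hbd ih ⊢
    rw [tupleSubdiv_succ, hcone, ih, ← hbd, chainMap_tupleChain, tupleSubdiv_succ, hf]

lemma chainMap_comp_tupleSubdivHomotopy (hf : ∀ n v, β' n (f ∘ v) = f (β n v)) (n : ℕ) :
    chainMap R (tuplesMap f) (n + 1) ∘ₗ tupleSubdivHomotopy R β n =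
      tupleSubdivHomotopy R β' n ∘ₗ chainMap R (tuplesMap f) n := by
  induction n with
  | zero => exact (LinearMap.comp_zero _).trans (LinearMap.zero_comp _).symm
  | succ n ih =>
    refine tuple_hom_ext fun v ↦ ?_
    have hcone := LinearMap.congr_fun (chainMap_comp_cone (R := R) (n := n + 1) f (β (n + 1) v))
    have hbd := LinearMap.congr_fun (boundary_comp_chainMap (R := R) (n := n) (tuplesMap f))
    have ih := LinearMap.congr_fun ih
    simp only [LinearMap.comp_apply] at hcone hbd ih ⊢
    rw [tupleSubdivHomotopy_succ, hcone, map_sub, ih, ← hbd, chainMap_tupleChain,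
      tupleSubdivHomotopy_succ, hf]

end Tuples

section SingularSet

/-- The topological `n`-simplex. -/
abbrev Simplex (n : ℕ) : Type := stdSimplex ℝ (Fin (n + 1))

/-- The singular simplicial set of a topological space. -/
noncomputable abbrev singular (X : Type) [TopologicalSpace X] : SSet.{0} :=
  TopCat.toSSet.obj (TopCat.of X)

variable {X Y Z : Type} [TopologicalSpace X] [TopologicalSpace Y] [TopologicalSpace Z]

/-- The map of singular simplicial sets induced by a continuous map. -/
noncomputable def singularMap (f : C(X, Y)) : singular X ⟶ singular Y :=
  TopCat.toSSet.map (TopCat.ofHom f)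

/-- The singular simplex given by a continuous map out of the topological simplex. -/
noncomputable def singularSimplex {n : ℕ} : C(Simplex n, X) ≃ (singular X) _⦋n⦌ :=
  (TopCat.toSSetObjEquiv (TopCat.of X) (op ⦋n⦌)).symm

lemma singularMap_singularSimplex (f : C(X, Y)) {n : ℕ} (σ : C(Simplex n, X)) :
    (singularMap f).app (op ⦋n⦌) (singularSimplex σ) = singularSimplex (f.comp σ) :=
  rfl

end SingularSet

section AffineSimplices

variable {m n p : ℕ}

/-- The map of topological simplices induced by a map in the simplex category. -/
noncomputable def simplexMap (θ : ⦋p⦌ ⟶ ⦋n⦌) : C(Simplex p, Simplex n) :=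
  ⟨stdSimplex.map θ.toOrderHom, stdSimplex.continuous_map _⟩

/-- The affine singular simplex with given vertices. -/
noncomputable def affineSimplex (v : Fin (n + 1) → Simplex m) : C(Simplex n, Simplex m) where
  toFun t := ⟨∑ i, t i • ⇑(v i), (convex_stdSimplex ℝ _).sum_mem (fun i _ ↦ t.2.1 i) t.2.2
    fun i _ ↦ (v i).2⟩
  continuous_toFun := Continuous.subtype_mk (continuous_finsetSum _ fun i _ ↦
    ((continuous_apply i).comp continuous_subtype_val).smul continuous_const) _

lemma coe_affineSimplex (v : Fin (n + 1) → Simplex m) (t : Simplex n) :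
    ⇑(affineSimplex v t) = ∑ i, t i • ⇑(v i) :=
  rfl

lemma affineSimplex_apply (v : Fin (n + 1) → Simplex m) (t : Simplex n) (j : Fin (m + 1)) :
    affineSimplex v t j = ∑ i, t i * v i j := by
  rw [coe_affineSimplex, Finset.sum_apply]
  rfl

lemma affineSimplex_comp (u : Fin (m + 1) → Simplex p) (v : Fin (n + 1) → Simplex m) :
    (affineSimplex u).comp (affineSimplex v) = affineSimplex (affineSimplex u ∘ v) := by
  refine ContinuousMap.ext fun t ↦ stdSimplex.ext (funext fun j ↦ ?_)
  simp only [ContinuousMap.comp_apply, Function.comp_apply, affineSimplex_apply, Finset.sum_mul,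
    Finset.mul_sum, mul_assoc]
  exact Finset.sum_comm

lemma affineSimplex_comp_simplexMap (v : Fin (n + 1) → Simplex m) (θ : ⦋p⦌ ⟶ ⦋n⦌) :
    (affineSimplex v).comp (simplexMap θ) = affineSimplex (v ∘ θ.toOrderHom) := by
  refine ContinuousMap.ext fun t ↦ stdSimplex.ext (funext fun j ↦ ?_)
  have hmap (i : Fin (n + 1)) :
      simplexMap θ t i = ∑ k, if θ.toOrderHom k = i then t k else 0 := by
    refine (congrFun (stdSimplex.map_coe θ.toOrderHom t) i).trans ?_
    rw [FunOnFinite.linearMap_apply_apply, Finset.sum_filter]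
  simp only [ContinuousMap.comp_apply, Function.comp_apply, affineSimplex_apply, hmap,
    Finset.sum_mul]
  rw [Finset.sum_comm]
  simp [ite_mul]

lemma affineSimplex_vertex : affineSimplex (stdSimplex.vertex (S := ℝ)) = .id (Simplex n) := by
  refine ContinuousMap.ext fun t ↦ stdSimplex.ext (funext fun j ↦ ?_)
  simp [affineSimplex_apply, Pi.single_apply]

lemma affineSimplex_comp_vertex (v : Fin (n + 1) → Simplex m) :
    affineSimplex v ∘ stdSimplex.vertex = v := by
  refine funext fun i ↦ stdSimplex.ext (funext fun j ↦ ?_)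
  simp [affineSimplex_apply, Pi.single_apply]

/-- The barycentre of a tuple of points of a simplex. -/
noncomputable def simplexBarycenter (m n : ℕ) (v : Fin (n + 1) → Simplex m) : Simplex m :=
  affineSimplex v stdSimplex.barycenter

lemma simplexBarycenter_comp (u : Fin (m + 1) → Simplex p) (n : ℕ) (v : Fin (n + 1) → Simplex m) :
    simplexBarycenter p n (affineSimplex u ∘ v) = affineSimplex u (simplexBarycenter m n v) := by
  rw [simplexBarycenter, ← affineSimplex_comp]
  rfl

variable {R : Type} [Ring R] {X : Type} [TopologicalSpace X]

/-- A singular simplex of `X` sends tuples of points of its domain, viewed as affine simplices, to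
singular simplices of `X`. -/
noncomputable def tuplesToSingular (σ : C(Simplex m, X)) : tuples (Simplex m) ⟶ singular X where
  app k := ↾fun v ↦ singularSimplex (n := k.unop.len) (σ.comp (affineSimplex v))
  naturality := by
    rintro ⟨a⟩ ⟨b⟩ θ
    induction a using SimplexCategory.rec
    induction b using SimplexCategory.rec
    exact ConcreteCategory.hom_ext _ _ fun v ↦ congrArg (fun τ ↦ singularSimplex (σ.comp τ))
      (affineSimplex_comp_simplexMap v θ.unop).symm

lemma chainMap_tuplesToSingular_tupleChain (σ : C(Simplex m, X)) (v : Fin (n + 1) → Simplex m) :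
    chainMap R (tuplesToSingular σ) n (tupleChain R v) =
      basisChain R (singularSimplex (σ.comp (affineSimplex v))) :=
  chainMap_basisChain _ _

lemma chainMap_tuplesToSingular_vertex (σ : C(Simplex n, X)) :
    chainMap R (tuplesToSingular σ) n (tupleChain R stdSimplex.vertex) =
      basisChain R (singularSimplex σ) := by
  rw [chainMap_tuplesToSingular_tupleChain, affineSimplex_vertex, ContinuousMap.comp_id]

lemma chainMap_tuplesToSingular_comp (σ : C(Simplex m, X)) (u : Fin (p + 1) → Simplex m) :
    chainMap R (tuplesToSingular (σ.comp (affineSimplex u))) n =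
      chainMap R (tuplesToSingular σ) n ∘ₗ chainMap R (tuplesMap (affineSimplex u)) n := by
  refine tuple_hom_ext fun v ↦ ?_
  rw [LinearMap.comp_apply, chainMap_tupleChain, chainMap_tuplesToSingular_tupleChain,
    chainMap_tuplesToSingular_tupleChain, ContinuousMap.comp_assoc, affineSimplex_comp]

lemma singular_hom_ext {M : Type*} [AddCommGroup M] [Module R M]
    {f g : Chain R (singular X) n →ₗ[R] M} (h : ∀ σ : C(Simplex n, X),
      f ∘ₗ chainMap R (tuplesToSingular σ) n = g ∘ₗ chainMap R (tuplesToSingular σ) n) : f = g :=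
  chain_hom_ext <| singularSimplex.surjective.forall.2 fun σ ↦ by
    rw [← chainMap_tuplesToSingular_vertex]
    exact LinearMap.congr_fun (h σ) _

variable (R) in
/-- Barycentric subdivision of affine chains. -/
noncomputable abbrev affineSubdiv (m n : ℕ) :
    Chain R (tuples (Simplex m)) n →ₗ[R] Chain R (tuples (Simplex m)) n :=
  tupleSubdiv R (simplexBarycenter m) n

variable (R) in
/-- The chain homotopy between the identity and the barycentric subdivision of affine chains. -/
noncomputable abbrev affineSubdivHomotopy (m n : ℕ) :
    Chain R (tuples (Simplex m)) n →ₗ[R] Chain R (tuples (Simplex m)) (n + 1) :=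
  tupleSubdivHomotopy R (simplexBarycenter m) n

variable (R X) in
/-- Barycentric subdivision of singular chains. -/
noncomputable def subdiv (n : ℕ) : Chain R (singular X) n →ₗ[R] Chain R (singular X) n :=
  chainLift fun x ↦ chainMap R (tuplesToSingular (singularSimplex.symm x)) n
    (affineSubdiv R n n (tupleChain R stdSimplex.vertex))

variable (R X) in
/-- The chain homotopy between the identity and the barycentric subdivision of singular chains. -/
noncomputable def subdivHomotopy (n : ℕ) :
    Chain R (singular X) n →ₗ[R] Chain R (singular X) (n + 1) :=
  chainLift fun x ↦ chainMap R (tuplesToSingular (singularSimplex.symm x)) (n + 1)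
    (affineSubdivHomotopy R n n (tupleChain R stdSimplex.vertex))

lemma subdiv_singularSimplex (σ : C(Simplex n, X)) :
    subdiv R X n (basisChain R (singularSimplex σ)) = chainMap R (tuplesToSingular σ) n
      (affineSubdiv R n n (tupleChain R stdSimplex.vertex)) := by
  rw [subdiv, chainLift_basisChain, Equiv.symm_apply_apply]

lemma subdivHomotopy_singularSimplex (σ : C(Simplex n, X)) :
    subdivHomotopy R X n (basisChain R (singularSimplex σ)) =
      chainMap R (tuplesToSingular σ) (n + 1)
        (affineSubdivHomotopy R n n (tupleChain R stdSimplex.vertex)) := by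
  rw [subdivHomotopy, chainLift_basisChain, Equiv.symm_apply_apply]

lemma subdiv_comp_tuplesToSingular (σ : C(Simplex m, X)) :
    subdiv R X n ∘ₗ chainMap R (tuplesToSingular σ) n =
      chainMap R (tuplesToSingular σ) n ∘ₗ affineSubdiv R m n := by
  refine tuple_hom_ext fun v ↦ ?_
  have hv := LinearMap.congr_fun (chainMap_comp_tupleSubdiv (R := R) (simplexBarycenter_comp v) n)
    (tupleChain R stdSimplex.vertex)
  rw [LinearMap.comp_apply, LinearMap.comp_apply, chainMap_tupleChain,
    affineSimplex_comp_vertex] at hv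
  rw [LinearMap.comp_apply, LinearMap.comp_apply, chainMap_tuplesToSingular_tupleChain,
    subdiv_singularSimplex, chainMap_tuplesToSingular_comp, LinearMap.comp_apply, hv]

lemma subdivHomotopy_comp_tuplesToSingular (σ : C(Simplex m, X)) :
    subdivHomotopy R X n ∘ₗ chainMap R (tuplesToSingular σ) n =
      chainMap R (tuplesToSingular σ) (n + 1) ∘ₗ affineSubdivHomotopy R m n := by
  refine tuple_hom_ext fun v ↦ ?_
  have hv := LinearMap.congr_fun
    (chainMap_comp_tupleSubdivHomotopy (R := R) (simplexBarycenter_comp v) n)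
    (tupleChain R stdSimplex.vertex)
  rw [LinearMap.comp_apply, LinearMap.comp_apply, chainMap_tupleChain,
    affineSimplex_comp_vertex] at hv
  rw [LinearMap.comp_apply, LinearMap.comp_apply, chainMap_tuplesToSingular_tupleChain,
    subdivHomotopy_singularSimplex, chainMap_tuplesToSingular_comp, LinearMap.comp_apply, hv]

lemma boundary_comp_subdiv :
    boundary R _ n ∘ₗ subdiv R X (n + 1) = subdiv R X n ∘ₗ boundary R _ n := by
  refine singular_hom_ext fun σ ↦ ?_
  rw [LinearMap.comp_assoc, subdiv_comp_tuplesToSingular, ← LinearMap.comp_assoc,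
    boundary_comp_chainMap, LinearMap.comp_assoc, boundary_comp_tupleSubdiv, LinearMap.comp_assoc,
    boundary_comp_chainMap, ← LinearMap.comp_assoc, ← LinearMap.comp_assoc,
    subdiv_comp_tuplesToSingular]

lemma boundary_comp_subdivHomotopy :
    boundary R _ (n + 1) ∘ₗ subdivHomotopy R X (n + 1) =
      LinearMap.id - subdiv R X (n + 1) - subdivHomotopy R X n ∘ₗ boundary R _ n := by
  refine singular_hom_ext fun σ ↦ ?_
  rw [LinearMap.comp_assoc, subdivHomotopy_comp_tuplesToSingular, ← LinearMap.comp_assoc,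
    boundary_comp_chainMap, LinearMap.comp_assoc, boundary_comp_tupleSubdivHomotopy,
    LinearMap.sub_comp, LinearMap.sub_comp, LinearMap.comp_sub, LinearMap.comp_sub,
    LinearMap.comp_assoc, boundary_comp_chainMap, subdiv_comp_tuplesToSingular,
    ← LinearMap.comp_assoc, ← LinearMap.comp_assoc, subdivHomotopy_comp_tuplesToSingular]
  rfl

lemma subdivHomotopy_zero : subdivHomotopy R X 0 = 0 :=
  singular_hom_ext fun σ ↦ (subdivHomotopy_comp_tuplesToSingular σ).trans (LinearMap.comp_zero _)

lemma subdiv_zero : subdiv R X 0 = LinearMap.id :=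
  singular_hom_ext fun σ ↦ subdiv_comp_tuplesToSingular σ

end AffineSimplices

section Mesh

variable {R : Type} [Ring R] {m n : ℕ} {v : Fin (n + 1) → Simplex m} {r : ℝ}

lemma affineSimplex_mem_of_convex {K : Set (Fin (m + 1) → ℝ)} (hK : Convex ℝ K)
    (hv : ∀ i, ⇑(v i) ∈ K) (t : Simplex n) : ⇑(affineSimplex v t) ∈ K :=
  hK.sum_mem (fun i _ ↦ t.2.1 i) t.2.2 fun i _ ↦ hv i

lemma dist_simplexBarycenter_le (h : ∀ i j, dist (v i) (v j) ≤ r) (j : Fin (n + 1)) :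
    dist (v j) (simplexBarycenter m n v) ≤ n / (n + 1) * r := by
  have hw : ∑ _i : Fin (n + 1), ((n : ℝ) + 1)⁻¹ = 1 := by simp [field]
  have hb : ⇑(simplexBarycenter m n v) = ∑ i, ((n : ℝ) + 1)⁻¹ • ⇑(v i) := by
    rw [simplexBarycenter, coe_affineSimplex]
    refine Finset.sum_congr rfl fun i _ ↦ congrArg (· • ⇑(v i)) ?_
    exact (stdSimplex.barycenter_apply i).trans (by simp)
  have hsub : ⇑(v j) - ⇑(simplexBarycenter m n v) =
      ∑ i ∈ Finset.univ.erase j, ((n : ℝ) + 1)⁻¹ • (⇑(v j) - ⇑(v i)) := by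
    rw [Finset.sum_erase _ (by simp), hb]
    simp only [smul_sub, Finset.sum_sub_distrib, ← Finset.sum_smul, hw, one_smul]
  rw [Subtype.dist_eq, dist_eq_norm]
  change ‖⇑(v j) - ⇑(simplexBarycenter m n v)‖ ≤ _
  rw [hsub]
  calc _ ≤ ∑ _i ∈ Finset.univ.erase j, ((n : ℝ) + 1)⁻¹ * r := by
        refine norm_sum_le_of_le _ fun i _ ↦ ?_
        rw [norm_smul, Real.norm_of_nonneg (by positivity), ← dist_eq_norm]
        exact mul_le_mul_of_nonneg_left (h j i) (by positivity)
    _ = n / (n + 1) * r := by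
        rw [Finset.sum_const, Finset.card_erase_of_mem (Finset.mem_univ j)]
        simp
        ring

/-- The tuples whose entries lie in the convex hull of `v` and have mutual distance at most `r`. -/
def fineTuples (v : Fin (n + 1) → Simplex m) (r : ℝ) (p : ℕ) : Set (Fin (p + 1) → Simplex m) :=
  {w | (∀ i, ⇑(w i) ∈ convexHull ℝ (Set.range fun j ↦ ⇑(v j))) ∧ ∀ i j, dist (w i) (w j) ≤ r}

lemma cons_mem_fineTuples {v : Fin (n + 2) → Simplex m} (h : ∀ i j, dist (v i) (v j) ≤ r)
    {i : Fin (n + 2)} {w : Fin (n + 1) → Simplex m}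
    (hw : w ∈ fineTuples (v ∘ i.succAbove) (n / (n + 1) * r) n) :
    (Fin.cons (simplexBarycenter m (n + 1) v) w : Fin (n + 2) → Simplex m) ∈
      fineTuples v ((n + 1 : ℕ) / ((n + 1 : ℕ) + 1) * r) (n + 1) := by
  set s : ℝ := (n + 1 : ℕ) / ((n + 1 : ℕ) + 1) * r
  have hr : 0 ≤ r := dist_nonneg.trans (h 0 0)
  have hle : (n : ℝ) / (n + 1) * r ≤ s := by
    refine mul_le_mul_of_nonneg_right ?_ hr
    rw [div_le_div_iff₀ (by positivity) (by positivity)]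
    push_cast
    linarith
  have hdist (j : Fin (n + 1)) : dist (w j) (simplexBarycenter m (n + 1) v) ≤ s :=
    convexHull_min (t := Metric.closedBall (⇑(simplexBarycenter m (n + 1) v)) s)
      (Set.range_subset_iff.2 fun k ↦ dist_simplexBarycenter_le h (i.succAbove k))
      (convex_closedBall _ _) (hw.1 j)
  refine ⟨fun j ↦ ?_, fun j k ↦ ?_⟩
  · cases j using Fin.cases with
    | zero =>
      exact affineSimplex_mem_of_convex (convex_convexHull ℝ _)
        (fun k ↦ subset_convexHull ℝ _ (Set.mem_range_self (f := fun j ↦ ⇑(v j)) k)) _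
    | succ j =>
      exact convexHull_mono (Set.range_comp_subset_range i.succAbove fun j ↦ ⇑(v j)) (hw.1 j)
  · cases j using Fin.cases <;> cases k using Fin.cases <;> simp only [Fin.cons_zero, Fin.cons_succ]
    · rw [dist_self]
      positivity
    · rw [dist_comm]
      exact hdist _
    · exact hdist _
    · exact (hw.2 _ _).trans hle

lemma affineSubdiv_mem_fineTuples (h : ∀ i j, dist (v i) (v j) ≤ r) :
    affineSubdiv R m n (tupleChain R v) ∈
      chainsIn R (X := tuples (Simplex m)) (fineTuples v (n / (n + 1) * r) n) := by
  induction n with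
  | zero =>
    refine basisChain_mem_chainsIn ⟨fun i ↦ subset_convexHull ℝ _ ⟨i, rfl⟩, fun i j ↦ ?_⟩
    rw [Subsingleton.elim (α := Fin 1) i j, dist_self]
    simp
  | succ n ih =>
    rw [tupleSubdiv_succ, boundary_tupleChain, map_sum, map_sum]
    refine sum_mem fun i _ ↦ ?_
    rw [map_zsmul, map_zsmul]
    refine zsmul_mem (Submodule.mem_comap.1 (chainsIn_le_comap _ (fun w hw ↦ ?_)
      (ih (v := v ∘ i.succAbove) fun _ _ ↦ h _ _))) _
    exact (cone_tupleChain (R := R) _ w).symm ▸ basisChain_mem_chainsIn (cons_mem_fineTuples h hw)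

lemma fineTuples_subset {w : Fin (n + 1) → Simplex m} {s : ℝ} {p : ℕ}
    (hw : w ∈ fineTuples v s n) : fineTuples w r p ⊆ fineTuples v r p := fun _ hu ↦
  ⟨fun i ↦ convexHull_min (Set.range_subset_iff.2 hw.1) (convex_convexHull ℝ _) (hu.1 i), hu.2⟩

lemma affineSubdiv_pow_mem_fineTuples (h : ∀ i j, dist (v i) (v j) ≤ r) (k : ℕ) :
    (affineSubdiv R m n ^ k) (tupleChain R v) ∈
      chainsIn R (X := tuples (Simplex m)) (fineTuples v ((n / (n + 1)) ^ k * r) n) := by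
  induction k with
  | zero =>
    rw [pow_zero, pow_zero, one_mul]
    exact basisChain_mem_chainsIn
      ⟨fun i ↦ subset_convexHull ℝ _ (Set.mem_range_self (f := fun j ↦ ⇑(v j)) i), h⟩
  | succ k ih =>
    rw [pow_succ' (affineSubdiv R m n), pow_succ' ((n : ℝ) / (n + 1)), mul_assoc,
      Module.End.mul_apply]
    exact chainsIn_le_comap (affineSubdiv R m n) (fun w hw ↦
      chainsIn_mono (fineTuples_subset hw) (affineSubdiv_mem_fineTuples hw.2)) ih

end Mesh

section SmallSimplices

variable {R : Type} [Ring R] {X Y : Type} [TopologicalSpace X] [TopologicalSpace Y] {ι : Type}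
  {U : ι → Set X} {n : ℕ}

/-- The subcomplex of singular simplices contained in a member of a family of sets. -/
def smallSimplices (U : ι → Set X) : (singular X).Subcomplex where
  obj n := {s | ∃ i, Set.range (singularSimplex (n := n.unop.len).symm s) ⊆ U i}
  map θ s := fun ⟨i, hi⟩ ↦ ⟨i, (Set.range_comp_subset_range (simplexMap θ.unop)
    (singularSimplex.symm s)).trans hi⟩

lemma singularSimplex_mem_smallSimplices {σ : C(Simplex n, X)} :
    singularSimplex σ ∈ (smallSimplices U).obj (op ⦋n⦌) ↔ ∃ i, Set.range σ ⊆ U i := by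
  change (∃ i, Set.range (singularSimplex.symm (singularSimplex σ)) ⊆ U i) ↔ _
  rw [Equiv.symm_apply_apply]

variable (R U) in
/-- The chains of small simplices. -/
noncomputable abbrev smallChains (n : ℕ) : Submodule R (Chain R (singular X) n) :=
  chainsIn R ((smallSimplices U).obj (op ⦋n⦌))

lemma range_chainMap_smallSimplices_ι :
    LinearMap.range (chainMap R (smallSimplices U).ι n) = smallChains R U n := by
  rw [range_chainMap]
  exact congrArg (chainsIn R) Subtype.range_coe

lemma chainMap_tuplesToSingular_mem_smallChains {m : ℕ} {σ : C(Simplex m, X)}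
    (hσ : singularSimplex σ ∈ (smallSimplices U).obj (op ⦋m⦌))
    (c : Chain R (tuples (Simplex m)) n) :
    chainMap R (tuplesToSingular σ) n c ∈ smallChains R U n := by
  obtain ⟨i, hi⟩ := singularSimplex_mem_smallSimplices.1 hσ
  have hle : LinearMap.range (chainMap R (tuplesToSingular σ) n) ≤ smallChains R U n := by
    rw [range_chainMap]
    refine chainsIn_mono (Set.range_subset_iff.2 fun v ↦ ?_)
    exact singularSimplex_mem_smallSimplices.2 ⟨i,
      (Set.range_comp_subset_range (affineSimplex v) σ).trans hi⟩
  exact hle ⟨c, rfl⟩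

lemma subdiv_mem_smallChains {c : Chain R (singular X) n} (hc : c ∈ smallChains R U n) :
    subdiv R X n c ∈ smallChains R U n := by
  refine chainsIn_le_comap (subdiv R X n) (singularSimplex.surjective.forall.2 fun σ hσ ↦ ?_) hc
  rw [subdiv_singularSimplex]
  exact chainMap_tuplesToSingular_mem_smallChains hσ _

lemma subdivHomotopy_mem_smallChains {c : Chain R (singular X) n} (hc : c ∈ smallChains R U n) :
    subdivHomotopy R X n c ∈ smallChains R U (n + 1) := by
  refine chainsIn_le_comap (subdivHomotopy R X n)
    (singularSimplex.surjective.forall.2 fun σ hσ ↦ ?_) hc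
  rw [subdivHomotopy_singularSimplex]
  exact chainMap_tuplesToSingular_mem_smallChains hσ _

lemma subdiv_pow_comp_tuplesToSingular {m : ℕ} (σ : C(Simplex m, X)) (k : ℕ) :
    (subdiv R X n ^ k) ∘ₗ chainMap R (tuplesToSingular σ) n =
      chainMap R (tuplesToSingular σ) n ∘ₗ (affineSubdiv R m n ^ k) := by
  induction k with
  | zero => rfl
  | succ k ih =>
    rw [pow_succ, pow_succ, Module.End.mul_eq_comp, Module.End.mul_eq_comp, LinearMap.comp_assoc,
      subdiv_comp_tuplesToSingular, ← LinearMap.comp_assoc, ih, LinearMap.comp_assoc]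

lemma exists_subdiv_pow_singularSimplex_mem (hU : ∀ i, IsOpen (U i)) (hc : ⋃ i, U i = Set.univ)
    (σ : C(Simplex n, X)) :
    ∃ k, (subdiv R X n ^ k) (basisChain R (singularSimplex σ)) ∈ smallChains R U n := by
  obtain ⟨δ, hδ, hball⟩ := lebesgue_number_lemma_of_metric (s := Set.univ) (c := fun i ↦ σ ⁻¹' U i)
    isCompact_univ (fun i ↦ (hU i).preimage σ.continuous)
    (by rw [← Set.preimage_iUnion, hc, Set.preimage_univ])
  obtain ⟨k, hk⟩ := exists_pow_lt_of_lt_one hδ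
    (show (n : ℝ) / (n + 1) < 1 by rw [div_lt_one (by positivity)]; linarith)
  refine ⟨k, ?_⟩
  have hdiam (i j : Fin (n + 1)) :
      dist (stdSimplex.vertex i : Simplex n) (stdSimplex.vertex j) ≤ 1 :=
    (Metric.dist_le_diam_of_mem (bounded_stdSimplex _) (Subtype.prop _)
      (Subtype.prop _)).trans diam_stdSimplex_le
  rw [← chainMap_tuplesToSingular_vertex, ← LinearMap.comp_apply,
    subdiv_pow_comp_tuplesToSingular]
  refine chainsIn_le_comap (chainMap R (tuplesToSingular σ) n) (fun w hw ↦ ?_)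
    (affineSubdiv_pow_mem_fineTuples hdiam k)
  obtain ⟨i, hi⟩ := hball (w 0) (Set.mem_univ _)
  refine (chainMap_tuplesToSingular_tupleChain (R := R) σ w).symm ▸ basisChain_mem_chainsIn
    (singularSimplex_mem_smallSimplices.2 ⟨i, Set.range_subset_iff.2 fun t ↦ hi ?_⟩)
  rw [mul_one] at hw
  exact (affineSimplex_mem_of_convex (convex_closedBall _ _) (fun j ↦ hw.2 j 0) t).trans_lt hk

lemma exists_subdiv_pow_mem (hU : ∀ i, IsOpen (U i)) (hc : ⋃ i, U i = Set.univ)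
    (c : Chain R (singular X) n) : ∃ k, (subdiv R X n ^ k) c ∈ smallChains R U n := by
  have hmono {c : Chain R (singular X) n} {k l : ℕ} (hkl : k ≤ l)
      (hk : (subdiv R X n ^ k) c ∈ smallChains R U n) :
      (subdiv R X n ^ l) c ∈ smallChains R U n := by
    induction l, hkl using Nat.le_induction with
    | base => exact hk
    | succ l _ ih =>
      rw [pow_succ']
      exact subdiv_mem_smallChains ih
  have htop : c ∈ chainsIn R Set.univ := chainsIn_univ (R := R) ▸ Submodule.mem_top
  induction htop using Submodule.span_induction with
  | mem x hx =>
    obtain ⟨s, -, rfl⟩ := hx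
    obtain ⟨σ, rfl⟩ := singularSimplex.surjective s
    exact exists_subdiv_pow_singularSimplex_mem hU hc σ
  | zero => exact ⟨0, zero_mem _⟩
  | add x y _ _ hx hy =>
    obtain ⟨⟨k, hk⟩, l, hl⟩ := And.intro hx hy
    exact ⟨max k l, map_add (subdiv R X n ^ max k l) x y ▸
      add_mem (hmono (le_max_left k l) hk) (hmono (le_max_right k l) hl)⟩
  | smul a x _ hx =>
    obtain ⟨k, hk⟩ := hx
    exact ⟨k, map_smul (subdiv R X n ^ k) a x ▸ Submodule.smul_mem _ a hk⟩

lemma exists_sub_boundary_sub_subdiv_mem {c : Chain R (singular X) n}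
    (hc : ∀ m, ((chains R).obj (singular X)).d n m c ∈ smallChains R U m) :
    ∃ y, c - boundary R _ n y - subdiv R X n c ∈ smallChains R U n := by
  refine ⟨subdivHomotopy R X n c, ?_⟩
  cases n with
  | zero => simp [subdivHomotopy_zero, subdiv_zero]
  | succ n =>
    have h : boundary R _ (n + 1) (subdivHomotopy R X (n + 1) c) =
        c - subdiv R X (n + 1) c - subdivHomotopy R X n (boundary R _ n c) :=
      LinearMap.congr_fun boundary_comp_subdivHomotopy c
    rw [h, sub_right_comm, sub_sub_self]
    exact subdivHomotopy_mem_smallChains (hc n)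

lemma exists_sub_boundary_sub_subdiv_pow_mem {c : Chain R (singular X) n}
    (hc : ∀ m, ((chains R).obj (singular X)).d n m c ∈ smallChains R U m) (k : ℕ) :
    ∃ y, c - boundary R _ n y - (subdiv R X n ^ k) c ∈ smallChains R U n := by
  induction k with
  | zero => exact ⟨0, by simp⟩
  | succ k ih =>
    obtain ⟨y, hy⟩ := ih
    obtain ⟨z, hz⟩ := exists_sub_boundary_sub_subdiv_mem hc
    have hcomm : subdiv R X n (boundary R _ n y) = boundary R _ n (subdiv R X (n + 1) y) :=
      (LinearMap.congr_fun boundary_comp_subdiv y).symm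
    refine ⟨z + subdiv R X (n + 1) y, ?_⟩
    convert add_mem hz (subdiv_mem_smallChains hy) using 1
    rw [map_sub, map_sub, map_add, hcomm, pow_succ', Module.End.mul_apply]
    abel

/-- The theorem of small simplices. -/
theorem quasiIso_smallSimplices_ι (hU : ∀ i, IsOpen (U i)) (hc : ⋃ i, U i = Set.univ) :
    QuasiIso ((chains R).map (smallSimplices U).ι) := by
  refine quasiIso_of_mono _ fun n c hbd ↦ ?_
  have hrange (m : ℕ) : LinearMap.range (((chains R).map (smallSimplices U).ι).f m).hom =
      smallChains R U m := range_chainMap_smallSimplices_ι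
  simp only [hrange] at hbd ⊢
  obtain ⟨k, hk⟩ := exists_subdiv_pow_mem hU hc c
  obtain ⟨y, hy⟩ := exists_sub_boundary_sub_subdiv_pow_mem hbd k
  refine ⟨y, ?_⟩
  rw [← sub_add_cancel (c - _) ((subdiv R X n ^ k) c)]
  exact add_mem hy hk

end SmallSimplices

section MayerVietoris

variable {R : Type} [Ring R] {X Y Z : Type} [TopologicalSpace X] [TopologicalSpace Y]
  [TopologicalSpace Z]

lemma isPushout_lift_of_isPullback {P U V W : SSet.{0}} {a : P ⟶ U} {b : P ⟶ V} {i : U ⟶ W}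
    {j : V ⟶ W} [Mono i] [Mono j] (h : IsPullback a b i j) {S : W.Subcomplex}
    (hS : SSet.Subcomplex.range i ⊔ SSet.Subcomplex.range j = S) :
    IsPushout a b (SSet.Subcomplex.lift i (le_sup_left.trans_eq hS))
      (SSet.Subcomplex.lift j (le_sup_right.trans_eq hS)) := by
  subst hS
  refine IsPushout.of_forall_isPushout_app fun n ↦ Types.isPushout_of_isPullback_of_mono
    (k := (SSet.Subcomplex.ι _).app n) (h.map ((evaluation _ _).obj n)) rfl rfl ?_ ?_
  · rw [Set.eq_univ_iff_forall]
    rintro ⟨s, ⟨u, rfl⟩ | ⟨v, rfl⟩⟩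
    exacts [Or.inl ⟨u, rfl⟩, Or.inr ⟨v, rfl⟩]
  · exact fun x y _ _ hxy ↦ (mono_iff_injective (j.app n)).1 inferInstance hxy

lemma singularMap_comp (f : C(X, Y)) (g : C(Y, Z)) :
    singularMap (g.comp f) = singularMap f ≫ singularMap g := by
  rw [singularMap, TopCat.ofHom_comp, Functor.map_comp]
  rfl

lemma singularMap_id : singularMap (.id X) = 𝟙 (singular X) :=
  TopCat.toSSet.map_id _

lemma mono_singularMap {f : C(X, Y)} (hf : Function.Injective f) : Mono (singularMap f) := by
  have : Mono (TopCat.ofHom f) := (TopCat.mono_iff_injective _).2 hf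
  exact inferInstanceAs (Mono (TopCat.toSSet.map _))

lemma exists_comp_eq_of_range_subset {f : C(X, Y)} (hf : Topology.IsEmbedding f) {g : C(Z, Y)}
    (h : Set.range g ⊆ Set.range f) : ∃ g' : C(Z, X), f.comp g' = g := by
  let g' : C(Z, Set.range f) := ⟨Set.codRestrict g _ (Set.range_subset_iff.1 h), by fun_prop⟩
  exact ⟨(ContinuousMap.mk _ hf.toHomeomorph.symm.continuous).comp g', ContinuousMap.ext fun z ↦
    congrArg Subtype.val (hf.toHomeomorph.apply_symm_apply (g' z))⟩

lemma singularSimplex_mem_range {f : C(X, Y)} (hf : Topology.IsEmbedding f) {n : ℕ}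
    {σ : C(Simplex n, Y)} :
    singularSimplex σ ∈ (SSet.Subcomplex.range (singularMap f)).obj (op ⦋n⦌) ↔
      Set.range σ ⊆ Set.range f := by
  refine ⟨fun ⟨s, hs⟩ ↦ ?_, fun h ↦ ?_⟩
  · obtain ⟨τ, rfl⟩ := singularSimplex.surjective s
    rw [← (singularSimplex.injective hs : f.comp τ = σ)]
    exact Set.range_comp_subset_range τ f
  · obtain ⟨τ, rfl⟩ := exists_comp_eq_of_range_subset hf h
    exact ⟨singularSimplex τ, rfl⟩

lemma range_singularMap_sup_range_singularMap {f : C(X, Z)} {g : C(Y, Z)}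
    (hf : Topology.IsEmbedding f) (hg : Topology.IsEmbedding g) :
    SSet.Subcomplex.range (singularMap f) ⊔ SSet.Subcomplex.range (singularMap g) =
      smallSimplices fun c ↦ bif c then Set.range f else Set.range g := by
  ext ⟨n⟩ s
  induction n using SimplexCategory.rec with | _ n
  obtain ⟨σ, rfl⟩ := singularSimplex.surjective s
  change singularSimplex σ ∈ (SSet.Subcomplex.range (singularMap f)).obj _ ∪
    (SSet.Subcomplex.range (singularMap g)).obj _ ↔ _
  rw [Set.mem_union, singularSimplex_mem_range hf, singularSimplex_mem_range hg,
    singularSimplex_mem_smallSimplices, Bool.exists_bool, or_comm]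
  rfl

lemma isPullback_singularMap {P U V W : Type} [TopologicalSpace P] [TopologicalSpace U]
    [TopologicalSpace V] [TopologicalSpace W] {a : C(P, U)} {b : C(P, V)} {i : C(U, W)}
    {j : C(V, W)} (comm : i.comp a = j.comp b) (hi : Function.Injective i)
    (hj : Function.Injective j) (ha : Topology.IsEmbedding (i.comp a))
    (hinter : Set.range i ∩ Set.range j ⊆ Set.range (i.comp a)) :
    IsPullback (singularMap a) (singularMap b) (singularMap i) (singularMap j) := by
  refine IsPullback.of_forall_isPullback_app fun ⟨n⟩ ↦ ?_
  induction n using SimplexCategory.rec with | _ n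
  have := mono_singularMap (f := a) (Function.Injective.of_comp (f := i) ha.injective)
  refine (Types.isPullback_iff _ _ _ _).2 ⟨?_, fun s t hst ↦ ?_, fun s t hst ↦ ?_⟩
  · rw [← NatTrans.comp_app, ← NatTrans.comp_app, ← singularMap_comp, ← singularMap_comp, comm]
  · exact (mono_iff_injective ((singularMap a).app _)).1 inferInstance hst.1
  · obtain ⟨σ, rfl⟩ := singularSimplex.surjective s
    obtain ⟨τ, rfl⟩ := singularSimplex.surjective t
    have h : i.comp σ = j.comp τ := singularSimplex.injective hst
    have hσ : Set.range (i.comp σ) ⊆ Set.range i := Set.range_comp_subset_range σ i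
    have hτ : Set.range (i.comp σ) ⊆ Set.range j := h ▸ Set.range_comp_subset_range τ j
    obtain ⟨ρ, hρ⟩ := exists_comp_eq_of_range_subset ha ((Set.subset_inter hσ hτ).trans hinter)
    refine ⟨singularSimplex ρ, congrArg singularSimplex (?_ : a.comp ρ = σ),
      congrArg singularSimplex (?_ : b.comp ρ = τ)⟩
    · exact (ContinuousMap.cancel_left hi).1 hρ
    · rw [h, comm] at hρ
      exact (ContinuousMap.cancel_left hj).1 hρ

theorem isMayerVietoris_singular {P U V W : Type} [TopologicalSpace P] [TopologicalSpace U]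
    [TopologicalSpace V] [TopologicalSpace W] {a : C(P, U)} {b : C(P, V)} {i : C(U, W)}
    {j : C(V, W)} (comm : i.comp a = j.comp b) (ha : Topology.IsEmbedding a)
    (hi : Topology.IsOpenEmbedding i) (hj : Topology.IsOpenEmbedding j)
    (hcover : Set.range i ∪ Set.range j = Set.univ)
    (hinter : Set.range i ∩ Set.range j ⊆ Set.range (i.comp a)) :
    IsMayerVietoris (homologyLin ((chains R).map (singularMap a)))
      (homologyLin ((chains R).map (singularMap b)))
      (homologyLin ((chains R).map (singularMap i)))
      (homologyLin ((chains R).map (singularMap j))) := by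
  have := mono_singularMap hi.injective
  have := mono_singularMap hj.injective
  have := mono_singularMap ha.injective
  have hS := range_singularMap_sup_range_singularMap hi.isEmbedding hj.isEmbedding
  have : QuasiIso ((chains R).map (smallSimplices fun c ↦
      bif c then Set.range i else Set.range j).ι) := quasiIso_smallSimplices_ι
    (Bool.forall_bool.2 ⟨hj.isOpen_range, hi.isOpen_range⟩) (by
      rw [← Set.union_eq_iUnion, hcover])
  have h := isMayerVietoris_chains (R := R) (isPushout_lift_of_isPullback
    (isPullback_singularMap comm hi.injective hj.injective
      (hi.isEmbedding.comp ha) hinter) hS)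
  simpa only [← Functor.map_comp] using! h.comp_quasiIso ((chains R).map (SSet.Subcomplex.ι _))

end MayerVietoris

section MayerVietorisDimensions

variable {R : Type*} [Ring R] {P U V W : ℕ → Type*}
  [∀ n, AddCommGroup (P n)] [∀ n, Module R (P n)] [∀ n, AddCommGroup (U n)] [∀ n, Module R (U n)]
  [∀ n, AddCommGroup (V n)] [∀ n, Module R (V n)] [∀ n, AddCommGroup (W n)] [∀ n, Module R (W n)]
  {a : ∀ n, P n →ₗ[R] U n} {b : ∀ n, P n →ₗ[R] V n} {i : ∀ n, U n →ₗ[R] W n}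
  {j : ∀ n, V n →ₗ[R] W n}

namespace IsMayerVietoris

lemma comp_eq (h : IsMayerVietoris a b i j) (n : ℕ) : i n ∘ₗ a n = j n ∘ₗ b n := by
  obtain ⟨δ, -, -, h₃, -⟩ := h
  have := (h₃ n).linearMap_comp_eq_zero
  rwa [LinearMap.coprod_comp_prod, LinearMap.comp_neg, ← sub_eq_add_neg, sub_eq_zero] at this

lemma range_coprod (h : IsMayerVietoris a b i j) {n : ℕ} (ha : Function.Surjective (a n)) :
    ((i n).coprod (j n)).range = (j n).range := by
  rw [LinearMap.range_coprod, sup_eq_right,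
    ← LinearMap.range_comp_of_range_eq_top (i n) (LinearMap.range_eq_top.2 ha), h.comp_eq]
  exact LinearMap.range_comp_le_range _ _

lemma exists_connecting_map (h : IsMayerVietoris a b i j)
    (ha : ∀ n, Function.Surjective (a n)) :
    ∃ δ : ∀ n, W (n + 1) →ₗ[R] P n, (∀ n, (δ n).ker = (j (n + 1)).range) ∧
      (∀ n, (δ n).range = (a n).ker ⊓ (b n).ker) ∧ (j 0).range = ⊤ := by
  have hr (n : ℕ) := h.range_coprod (ha n)
  obtain ⟨δ, h₁, h₂, -, h₄⟩ := h
  refine ⟨δ, fun n ↦ (h₁ n).linearMap_ker_eq.trans (hr (n + 1)), fun n ↦ ?_,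
    (hr 0).symm.trans (LinearMap.range_eq_top.2 h₄)⟩
  rw [← (h₂ n).linearMap_ker_eq, LinearMap.ker_prod, LinearMap.ker_neg]

lemma finite [IsNoetherianRing R] [∀ n, Module.Finite R (P n)] [∀ n, Module.Finite R (V n)]
    (h : IsMayerVietoris a b i j) (ha : ∀ n, Function.Surjective (a n)) (n : ℕ) :
    Module.Finite R (W n) := by
  obtain ⟨δ, hδ, -, h₀⟩ := h.exists_connecting_map ha
  cases n with
  | zero => exact .of_surjective _ (LinearMap.range_eq_top.1 h₀)
  | succ n =>
    have := isNoetherian_of_range_eq_ker (j (n + 1)) (δ n) (hδ n).symm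
    infer_instance

lemma bijective_coprod (h : IsMayerVietoris a b i j) [∀ n, Subsingleton (P n)] (n : ℕ) :
    Function.Bijective ((i n).coprod (j n)) := by
  obtain ⟨δ, h₁, -, h₃, h₄⟩ := h
  refine ⟨(injective_iff_map_eq_zero _).2 fun x hx ↦ ?_, ?_⟩
  · obtain ⟨w, rfl⟩ := (h₃ n x).1 hx
    rw [Subsingleton.elim w 0, map_zero]
  · cases n with
    | zero => exact h₄
    | succ n => exact fun x ↦ (h₁ n x).1 (Subsingleton.elim _ _)

end IsMayerVietoris

end MayerVietorisDimensions

section MayerVietorisFinrank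

open Module

variable {K : Type*} [Field K] {P U V W : ℕ → Type*}
  [∀ n, AddCommGroup (P n)] [∀ n, Module K (P n)] [∀ n, AddCommGroup (U n)] [∀ n, Module K (U n)]
  [∀ n, AddCommGroup (V n)] [∀ n, Module K (V n)] [∀ n, AddCommGroup (W n)] [∀ n, Module K (W n)]
  {a : ∀ n, P n →ₗ[K] U n} {b : ∀ n, P n →ₗ[K] V n} {i : ∀ n, U n →ₗ[K] W n}
  {j : ∀ n, V n →ₗ[K] W n}

namespace IsMayerVietoris

lemma finrank_zero_le [∀ n, Module.Finite K (V n)] (h : IsMayerVietoris a b i j)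
    (ha : ∀ n, Function.Surjective (a n)) :
    finrank K (W 0) ≤ finrank K (V 0) := by
  obtain ⟨δ, -, -, h₀⟩ := h.exists_connecting_map ha
  exact LinearMap.finrank_le_finrank_of_surjective (LinearMap.range_eq_top.1 h₀)

lemma finrank_zero_eq (h : IsMayerVietoris a b i j) (ha : ∀ n, Function.Surjective (a n))
    (hj : Function.Injective (j 0)) : finrank K (W 0) = finrank K (V 0) := by
  obtain ⟨δ, -, -, h₀⟩ := h.exists_connecting_map ha
  exact (LinearEquiv.ofBijective _ ⟨hj, LinearMap.range_eq_top.1 h₀⟩).finrank_eq.symm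

variable [∀ n, Module.Finite K (P n)] [∀ n, Module.Finite K (V n)]

lemma finrank_succ_add_le (h : IsMayerVietoris a b i j) (ha : ∀ n, Function.Surjective (a n))
    (n : ℕ) :
    finrank K (W (n + 1)) + finrank K (U n) ≤ finrank K (V (n + 1)) + finrank K (P n) := by
  have := h.finite ha (n + 1)
  obtain ⟨δ, hker, hrange, -⟩ := h.exists_connecting_map ha
  have hW := (δ n).finrank_range_add_finrank_ker
  have hP := (a n).finrank_range_add_finrank_ker
  have hδ : finrank K (δ n).range ≤ finrank K (a n).ker :=
    Submodule.finrank_mono ((hrange n).trans_le inf_le_left)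
  have hV := (j (n + 1)).finrank_range_le
  rw [LinearMap.range_eq_top.2 (ha n), finrank_top] at hP
  rw [hker] at hW
  lia

lemma finrank_succ_add_eq (h : IsMayerVietoris a b i j) (ha : ∀ n, Function.Surjective (a n))
    (hj : ∀ n, Function.Injective (j n)) (n : ℕ) :
    finrank K (W (n + 1)) + finrank K (U n) = finrank K (V (n + 1)) + finrank K (P n) := by
  have := h.finite ha (n + 1)
  have hab : (a n).ker ≤ (b n).ker := fun w hw ↦ hj n <| by
    rw [map_zero, ← LinearMap.comp_apply, ← h.comp_eq, LinearMap.comp_apply, LinearMap.mem_ker.1 hw,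
      map_zero]
  obtain ⟨δ, hker, hrange, -⟩ := h.exists_connecting_map ha
  have hW := (δ n).finrank_range_add_finrank_ker
  have hP := (a n).finrank_range_add_finrank_ker
  have hV := LinearMap.finrank_range_of_inj (hj (n + 1))
  rw [LinearMap.range_eq_top.2 (ha n), finrank_top] at hP
  rw [hker, hrange, inf_eq_left.2 hab] at hW
  lia

end IsMayerVietoris

end MayerVietorisFinrank

section Homology

variable (R : Type) [Ring R] {X Y Z : Type} [TopologicalSpace X] [TopologicalSpace Y]
  [TopologicalSpace Z]

/-- Singular homology with coefficients in a ring. -/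
noncomputable abbrev Homology (X : Type) [TopologicalSpace X] (n : ℕ) : ModuleCat.{0} R :=
  ((chains R).obj (singular X)).homology n

/-- The map on singular homology induced by a continuous map. -/
noncomputable def inducedMap (f : C(X, Y)) (n : ℕ) : Homology R X n →ₗ[R] Homology R Y n :=
  homologyLin ((chains R).map (singularMap f)) n

lemma inducedMap_comp (g : C(Y, Z)) (f : C(X, Y)) (n : ℕ) :
    inducedMap R (g.comp f) n = inducedMap R g n ∘ₗ inducedMap R f n := by
  rw [inducedMap, singularMap_comp, Functor.map_comp, homologyLin_comp]
  rfl

lemma inducedMap_id (n : ℕ) : inducedMap R (.id X) n = LinearMap.id := by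
  rw [inducedMap, singularMap_id, CategoryTheory.Functor.map_id, homologyLin_id]

lemma inducedMap_eq_of_homotopic {f g : C(X, Y)} (h : f.Homotopic g) (n : ℕ) :
    inducedMap R f n = inducedMap R g n :=
  let ⟨H⟩ := h
  homologyLin_chains_eq_of_homotopy
    (TopCat.Homotopy.toSSet (f := TopCat.ofHom f) (g := TopCat.ofHom g) H) n

/-- A homotopy equivalence induces isomorphisms on singular homology. -/
noncomputable def homologyEquiv (e : ContinuousMap.HomotopyEquiv X Y) (n : ℕ) :
    Homology R X n ≃ₗ[R] Homology R Y n :=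
  .ofLinearMap (inducedMap R e.toFun n) (inducedMap R e.invFun n)
    (by rw [← inducedMap_comp, inducedMap_eq_of_homotopic R e.right_inv, inducedMap_id])
    (by rw [← inducedMap_comp, inducedMap_eq_of_homotopic R e.left_inv, inducedMap_id])

/-- The singular chain complex of a totally disconnected space is
`R[X] ←0- R[X] ←𝟙- R[X] ←0- R[X] ⋯`. -/
noncomputable def chainsIsoOfTotallyDisconnected [TotallyDisconnectedSpace X] :
    (chains R).obj (singular X) ≅ ChainComplex.alternatingConst.obj ((ModuleCat.free R).obj X) :=
  (alternatingFaceMapComplex _).mapIso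
      (((SimplicialObject.whiskering _ _).obj _).mapIso (TopCat.toSSetIsoConst (.of X)) ≪≫
        Functor.constComp _ _ _) ≪≫
    alternatingFaceMapComplexConst.app _

instance subsingleton_homology_succ [TotallyDisconnectedSpace X] (n : ℕ) :
    Subsingleton (Homology R X (n + 1)) :=
  ModuleCat.subsingleton_of_isZero <| ExactAt.isZero_homology <|
    .of_iso (ChainComplex.alternatingConst_exactAt _ _ n.succ_ne_zero)
      (chainsIsoOfTotallyDisconnected R).symm

/-- The zeroth homology of a totally disconnected space is free on its points. -/
noncomputable def homologyZeroEquiv [TotallyDisconnectedSpace X] : Homology R X 0 ≃ₗ[R] X →₀ R :=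
  ((homologyFunctor _ _ 0).mapIso (chainsIsoOfTotallyDisconnected R) ≪≫
    ChainComplex.alternatingConstHomologyZero _).toLinearEquiv

instance subsingleton_homology_of_isEmpty [IsEmpty X] (n : ℕ) :
    Subsingleton (Homology R X n) := by
  cases n with
  | zero => exact (homologyZeroEquiv R).subsingleton
  | succ n => infer_instance

/-- Homology is finitely generated in every degree. -/
class HasFiniteHomology (X : Type) [TopologicalSpace X] : Prop where
  finite (n : ℕ) : Module.Finite R (Homology R X n)

attribute [instance] HasFiniteHomology.finite

instance [Finite X] [TotallyDisconnectedSpace X] : HasFiniteHomology R X where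
  finite n := by
    cases n with
    | zero => exact .equiv (homologyZeroEquiv R).symm
    | succ n => infer_instance

lemma HasFiniteHomology.of_homotopyEquiv [HasFiniteHomology R Y]
    (e : ContinuousMap.HomotopyEquiv X Y) : HasFiniteHomology R X where
  finite n := .equiv (homologyEquiv R e n).symm

end Homology

section BettiNumbers

variable (K : Type) [Field K] {X Y : Type} [TopologicalSpace X] [TopologicalSpace Y]

/-- The Betti numbers of a space with coefficients in a field. -/
noncomputable def bettiNumber (X : Type) [TopologicalSpace X] (n : ℕ) : ℕ :=
  Module.finrank K (Homology K X n)

lemma bettiNumber_eq_of_homotopyEquiv (e : ContinuousMap.HomotopyEquiv X Y) (n : ℕ) :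
    bettiNumber K X n = bettiNumber K Y n :=
  (homologyEquiv K e n).finrank_eq

lemma bettiNumber_of_unique [Unique X] (n : ℕ) : bettiNumber K X n = if n = 0 then 1 else 0 := by
  cases n with
  | zero => simpa using! (homologyZeroEquiv K (X := X)).finrank_eq
  | succ n => exact Module.finrank_zero_of_subsingleton

end BettiNumbers

section Transfer

/-- A free double covering `p` of simplicial sets, with deck transformation `t`. -/
structure IsDoubleCover {A B : SSet.{0}} (p : A ⟶ B) (t : A ⟶ A) : Prop where
  comp_eq : t ≫ p = p
  surjective (n : ℕ) : Function.Surjective (p.app (op ⦋n⦌))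
  free {n : ℕ} (x : A _⦋n⦌) : t.app (op ⦋n⦌) x ≠ x
  fiber {n : ℕ} {x y : A _⦋n⦌} (h : p.app (op ⦋n⦌) x = p.app (op ⦋n⦌) y) :
    x = y ∨ x = t.app (op ⦋n⦌) y

lemma add_self_eq_zero_of_charP_two (R : Type*) [Ring R] [CharP R 2] {M : Type*} [AddCommGroup M]
    [Module R M] (x : M) : x + x = 0 := by
  rw [← two_smul R, CharTwo.two_eq_zero, zero_smul]

namespace IsDoubleCover

variable (R : Type) [Ring R] {A B : SSet.{0}} {p : A ⟶ B} {t : A ⟶ A} {n : ℕ}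

lemma app_app (h : IsDoubleCover p t) (x : A _⦋n⦌) :
    p.app (op ⦋n⦌) (t.app (op ⦋n⦌) x) = p.app (op ⦋n⦌) x :=
  ConcreteCategory.congr_hom (NatTrans.congr_app h.comp_eq (op ⦋n⦌)) x

lemma involutive (h : IsDoubleCover p t) (x : A _⦋n⦌) :
    t.app (op ⦋n⦌) (t.app (op ⦋n⦌) x) = x :=
  (h.fiber ((h.app_app _).trans (h.app_app x))).resolve_right (h.free _)

variable (h : IsDoubleCover p t)

/-- A chosen lift of a simplex of the base. -/
noncomputable def lift (s : B _⦋n⦌) : A _⦋n⦌ :=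
  (h.surjective n s).choose

lemma app_lift (s : B _⦋n⦌) : p.app (op ⦋n⦌) (h.lift s) = s :=
  (h.surjective n s).choose_spec

/-- The transfer, sending a simplex to the sum of its two lifts. -/
noncomputable def transferLin (n : ℕ) : Chain R B n →ₗ[R] Chain R A n :=
  chainLift fun s ↦ basisChain R (h.lift s) + basisChain R (t.app (op ⦋n⦌) (h.lift s))

lemma transferLin_app (x : A _⦋n⦌) :
    h.transferLin R n (basisChain R (p.app (op ⦋n⦌) x)) =
      basisChain R x + basisChain R (t.app (op ⦋n⦌) x) := by
  rw [transferLin, chainLift_basisChain]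
  rcases h.fiber (h.app_lift (p.app (op ⦋n⦌) x)) with e | e
  · rw [e]
  · rw [e, h.involutive, add_comm]

lemma boundary_comp_transferLin :
    boundary R A n ∘ₗ h.transferLin R (n + 1) = h.transferLin R n ∘ₗ boundary R B n := by
  refine chain_hom_ext ((h.surjective _).forall.2 fun x ↦ ?_)
  rw [LinearMap.comp_apply, LinearMap.comp_apply, h.transferLin_app R, map_add, boundary_basisChain,
    boundary_basisChain, boundary_basisChain, map_sum, ← Finset.sum_add_distrib]
  refine Finset.sum_congr rfl fun i _ ↦ ?_
  rw [← smul_add, map_zsmul, ← SSet.δ_naturality_apply p, ← SSet.δ_naturality_apply t,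
    h.transferLin_app R]

/-- The transfer as a chain map. -/
noncomputable def transfer : (chains R).obj B ⟶ (chains R).obj A where
  f n := ModuleCat.ofHom (h.transferLin R n)
  comm' := by
    rintro _ n rfl
    exact ModuleCat.hom_ext (h.boundary_comp_transferLin R)

variable [CharP R 2]

lemma chainMap_comp_transferLin : chainMap R p n ∘ₗ h.transferLin R n = 0 := by
  refine chain_hom_ext ((h.surjective _).forall.2 fun x ↦ ?_)
  rw [LinearMap.comp_apply, h.transferLin_app R, map_add, chainMap_basisChain, chainMap_basisChain,
    h.app_app, add_self_eq_zero_of_charP_two R, LinearMap.zero_apply]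

open Classical in
/-- In each degree, the transfer and the projection form a sequence split by the chosen lifts. -/
noncomputable def splitting (n : ℕ) : (ShortComplex.mk (ModuleCat.ofHom (h.transferLin R n))
      (ModuleCat.ofHom (chainMap R p n))
      (ModuleCat.hom_ext (h.chainMap_comp_transferLin R))).Splitting where
  r := ModuleCat.ofHom <| chainLift fun x ↦
    if x = h.lift (p.app (op ⦋n⦌) x) then 0 else basisChain R (p.app (op ⦋n⦌) x)
  s := ModuleCat.ofHom <| chainLift fun s ↦ basisChain R (h.lift s)
  f_r := ModuleCat.hom_ext <| chain_hom_ext fun s ↦ by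
    simp [transferLin, h.app_app, h.app_lift, h.free]
  s_g := ModuleCat.hom_ext <| chain_hom_ext fun s ↦ by simp [h.app_lift]
  id := ModuleCat.hom_ext <| chain_hom_ext fun x ↦ by
    by_cases hx : x = h.lift (p.app (op ⦋n⦌) x)
    · simp [← hx]
    · have hl := (h.fiber (h.app_lift (p.app (op ⦋n⦌) x))).resolve_left (Ne.symm hx)
      simp [hl, (h.free x).symm, h.transferLin_app R, add_assoc, add_self_eq_zero_of_charP_two R]

lemma transfer_comp_map : h.transfer R ≫ (chains R).map p = 0 :=
  HomologicalComplex.hom_ext _ _ fun _ ↦ ModuleCat.hom_ext (h.chainMap_comp_transferLin R)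

lemma shortExact_transfer :
    (ShortComplex.mk (h.transfer R) ((chains R).map p) (h.transfer_comp_map R)).ShortExact :=
  shortExact_of_degreewise_shortExact _ fun n ↦ (h.splitting R n).shortExact

end IsDoubleCover

end Transfer

section GysinDimensions

open Module

lemma exists_rank_of_exact {K : Type*} [Field K] {A B : ℕ → Type*} [∀ n, AddCommGroup (A n)]
    [∀ n, Module K (A n)] [∀ n, AddCommGroup (B n)] [∀ n, Module K (B n)]
    [∀ n, Module.Finite K (A n)] [∀ n, Module.Finite K (B n)] {p : ∀ n, A n →ₗ[K] B n}
    {t : ∀ n, B n →ₗ[K] A n} {δ : ∀ n, B (n + 1) →ₗ[K] B n}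
    (hpδ : ∀ n, Function.Exact (p (n + 1)) (δ n)) (hδt : ∀ n, Function.Exact (δ n) (t n))
    (htp : ∀ n, Function.Exact (t n) (p n)) (hp : Function.Surjective (p 0)) :
    ∃ r : ℕ → ℕ, r 0 = 0 ∧ ∀ n, finrank K (A n) + r n + r (n + 1) = 2 * finrank K (B n) := by
  obtain ⟨r, hr₀, hr⟩ : ∃ r : ℕ → ℕ, r 0 = 0 ∧ ∀ n, r (n + 1) = finrank K (δ n).range :=
    ⟨fun n ↦ Nat.casesOn n 0 fun n ↦ finrank K (δ n).range, rfl, fun _ ↦ rfl⟩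
  refine ⟨r, hr₀, fun n ↦ ?_⟩
  have hA := (p n).finrank_range_add_finrank_ker
  have hB := (t n).finrank_range_add_finrank_ker
  rw [(htp n).linearMap_ker_eq] at hA
  rw [(hδt n).linearMap_ker_eq, ← hr] at hB
  cases n with
  | zero =>
    rw [LinearMap.range_eq_top.2 hp, finrank_top] at hA
    lia
  | succ n =>
    have hδ := (δ n).finrank_range_add_finrank_ker
    rw [(hpδ n).linearMap_ker_eq, ← hr] at hδ
    lia

end GysinDimensions

section Coverings

variable {E X A : Type} [TopologicalSpace E] [TopologicalSpace X] [TopologicalSpace A]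

lemma exists_lift_of_contractible [ContractibleSpace A] {p : C(E, X)} (hp : IsCoveringMap p)
    (hs : Function.Surjective p) (f : C(A, X)) : ∃ g : C(A, E), p.comp g = f := by
  obtain ⟨a, ⟨H⟩⟩ := id_nullhomotopic A
  obtain ⟨e, he⟩ := hs (f a)
  let G : C(unitInterval × A, X) := f.comp H.symm.toContinuousMap
  have hG (x : A) : G (0, x) = p (ContinuousMap.const A e x) :=
    (congrArg f (H.symm.apply_zero x)).trans he.symm
  refine ⟨(hp.liftHomotopy G (.const A e) hG).comp (.prodMk (.const A 1) (.id A)),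
    ContinuousMap.ext fun x ↦ ?_⟩
  exact (congrFun (hp.liftHomotopy_lifts G (.const A e) hG) (1, x)).trans
    (congrArg f (H.symm.apply_one x))

instance (n : ℕ) : ContractibleSpace (Simplex n) :=
  (convex_stdSimplex ℝ (Fin (n + 1))).contractibleSpace ⟨_, single_mem_stdSimplex ℝ 0⟩

lemma isDoubleCover_singularMap {p : C(E, X)} {τ : C(E, E)} (hp : IsCoveringMap p)
    (hs : Function.Surjective p) (hτ : p.comp τ = p) (hfree : ∀ e, τ e ≠ e)
    (hfiber : ∀ e e', p e = p e' → e = e' ∨ e = τ e') :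
    IsDoubleCover (singularMap p) (singularMap τ) where
  comp_eq := by rw [← singularMap_comp, hτ]
  surjective n := singularSimplex.surjective.forall.2 fun f ↦ by
    obtain ⟨g, rfl⟩ := exists_lift_of_contractible hp hs f
    exact ⟨singularSimplex g, singularMap_singularSimplex p g⟩
  free {n} x hx := by
    obtain ⟨f, rfl⟩ := singularSimplex.surjective x
    rw [singularMap_singularSimplex] at hx
    obtain ⟨a⟩ : Nonempty (Simplex n) := inferInstance
    exact hfree (f a) (DFunLike.congr_fun (singularSimplex.injective hx) a)
  fiber {n x y} h := by
    obtain ⟨f, rfl⟩ := singularSimplex.surjective x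
    obtain ⟨g, rfl⟩ := singularSimplex.surjective y
    simp only [singularMap_singularSimplex, singularSimplex.injective.eq_iff] at h ⊢
    obtain ⟨a⟩ : Nonempty (Simplex n) := inferInstance
    have hcoe {g' : C(Simplex n, E)} (h' : p.comp f = p.comp g') (ha : f a = g' a) : f = g' :=
      DFunLike.coe_injective
        (hp.eq_of_comp_eq f.continuous g'.continuous (congrArg DFunLike.coe h') a ha)
    refine (hfiber _ _ (DFunLike.congr_fun h a)).imp (hcoe h) (hcoe ?_)
    rw [h, ← ContinuousMap.comp_assoc, hτ]

end Coverings

open Topology ContinuousMap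

section NegQuotients

variable {E E' E'' : Type} [TopologicalSpace E] [InvolutiveNeg E] [TopologicalSpace E']
  [InvolutiveNeg E'] [TopologicalSpace E''] [InvolutiveNeg E'']

/-- The orbit relation of the antipodal involution `e ↦ -e`. -/
def negSetoid (E : Type) [InvolutiveNeg E] : Setoid E where
  r a b := a = b ∨ a = -b
  iseqv :=
    { refl _ := .inl rfl
      symm := by
        rintro a b (rfl | rfl)
        exacts [.inl rfl, .inr (neg_neg b).symm]
      trans := by
        rintro a b c (rfl | rfl) (rfl | rfl)
        exacts [.inl rfl, .inr rfl, .inr rfl, .inl (neg_neg c)] }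

/-- The action of the group `{1, -1}` on `E` through the antipodal involution. -/
abbrev negAction (E : Type) [InvolutiveNeg E] : MulAction ℤˣ E where
  smul u e := if u = 1 then e else -e
  one_smul _ := if_pos rfl
  mul_smul u v e := by
    change (if u * v = 1 then e else -e) =
      if u = 1 then (if v = 1 then e else -e) else -(if v = 1 then e else -e)
    rcases Int.units_eq_one_or u with rfl | rfl <;>
      rcases Int.units_eq_one_or v with rfl | rfl <;> simp

/-- The quotient of `E` by the antipodal involution. -/
def NegQuotient (E : Type) [InvolutiveNeg E] : Type := Quotient (negSetoid E)

namespace NegQuotient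

instance : TopologicalSpace (NegQuotient E) :=
  inferInstanceAs (TopologicalSpace (Quotient (negSetoid E)))

/-- The quotient map onto the quotient by the antipodal involution. -/
def mk (E : Type) [TopologicalSpace E] [InvolutiveNeg E] : C(E, NegQuotient E) :=
  ⟨Quotient.mk (negSetoid E), continuous_quotient_mk'⟩

lemma mk_eq_mk {a b : E} : mk E a = mk E b ↔ a = b ∨ a = -b := Quotient.eq (r := negSetoid E)

lemma mk_neg (a : E) : mk E (-a) = mk E a := mk_eq_mk.2 (.inr rfl)

lemma mk_surjective : Function.Surjective (mk E) := Quotient.mk_surjective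

lemma isQuotientMap_mk : IsQuotientMap (mk E) := isQuotientMap_quotient_mk'

/-- The map between antipodal quotients induced by an odd map. -/
def map (f : C(E, E')) (hf : Function.Odd f) : C(NegQuotient E, NegQuotient E') where
  toFun := Quotient.map f (by
    rintro _ b (rfl | rfl)
    exacts [.inl rfl, .inr (hf b)])
  continuous_toFun :=
    isQuotientMap_mk.continuous_iff.2 ((mk E').comp f).continuous

lemma map_mk (f : C(E, E')) (hf : Function.Odd f) (e : E) : map f hf (mk E e) = mk E' (f e) := rfl

lemma map_comp_map (g : C(E', E'')) (f : C(E, E')) (hg : Function.Odd g) (hf : Function.Odd f) :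
    (map g hg).comp (map f hf) = map (g.comp f) (hg.comp_odd hf) :=
  ContinuousMap.ext (mk_surjective.forall.2 fun _ ↦ rfl)

lemma map_id : map (.id E) (fun _ ↦ rfl) = .id (NegQuotient E) :=
  ContinuousMap.ext (mk_surjective.forall.2 fun _ ↦ rfl)

lemma isOpenQuotientMap_mk [ContinuousNeg E] : IsOpenQuotientMap (mk E) := by
  refine ⟨mk_surjective, (mk E).continuous, fun U hU ↦ ?_⟩
  have hU' : mk E ⁻¹' (mk E '' U) = U ∪ Neg.neg ⁻¹' U := by
    ext x
    simp only [Set.mem_preimage, Set.mem_image, mk_eq_mk, Set.mem_union]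
    refine ⟨?_, ?_⟩
    · rintro ⟨_, hy, rfl | rfl⟩
      exacts [.inl hy, .inr hy]
    · rintro (h | h)
      exacts [⟨x, h, .inl rfl⟩, ⟨-x, h, .inr rfl⟩]
  rw [← isQuotientMap_mk.isOpen_preimage, hU']
  exact hU.union (hU.preimage continuous_neg)

lemma map_homotopic [ContinuousNeg E] {f g : C(E, E')} {hf : Function.Odd f}
    {hg : Function.Odd g} (h : f.HomotopicWith g fun h ↦ Function.Odd h) :
    (map f hf).Homotopic (map g hg) := by
  obtain ⟨H⟩ := h
  have hq : IsOpenQuotientMap (Prod.map id (mk E) : unitInterval × E → _) :=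
    IsOpenQuotientMap.id.prodMap isOpenQuotientMap_mk
  refine ⟨⟨⟨fun q ↦ map (H.toHomotopy.curry q.1) (H.prop q.1) q.2, ?_⟩, ?_, ?_⟩⟩
  · exact hq.isQuotientMap.continuous_iff.2 ((mk E').comp H.toContinuousMap).continuous
  · exact mk_surjective.forall.2 fun e ↦ congrArg (mk E') (H.apply_zero e)
  · exact mk_surjective.forall.2 fun e ↦ congrArg (mk E') (H.apply_one e)

lemma isOpenEmbedding_map [ContinuousNeg E'] {f : C(E, E')} (hf : Function.Odd f)
    (h : IsOpenEmbedding f) : IsOpenEmbedding (map f hf) := by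
  refine .of_continuous_injective_isOpenMap (map f hf).continuous ?_ ?_
  · refine mk_surjective.forall₂.2 fun a b hab ↦ ?_
    rw [map_mk, map_mk, mk_eq_mk, ← hf, h.injective.eq_iff, h.injective.eq_iff] at hab
    exact mk_eq_mk.2 hab
  · exact IsOpenMap.of_comp (mk E).continuous mk_surjective
      (isOpenQuotientMap_mk.isOpenMap.comp h.isOpenMap)

lemma isCoveringMap_mk [T2Space E] [ContinuousNeg E] (hfree : ∀ e : E, -e ≠ e) :
    IsCoveringMap (mk E) := by
  let _ : MulAction ℤˣ E := negAction E
  have hneg (e : E) : (-1 : ℤˣ) • e = -e := if_neg (by decide)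
  have hfactor : IsQuotientCoveringMap (mk E) ℤˣ :=
    { isQuotientMap_mk with
      continuous_const_smul u := by
        rcases Int.units_eq_one_or u with rfl | rfl
        · simpa only [one_smul] using! continuous_id
        · simpa only [hneg] using continuous_neg
      apply_eq_iff_mem_orbit {a b} := by
        rw [mk_eq_mk, MulAction.mem_orbit_iff]
        refine ⟨?_, ?_⟩
        · rintro (rfl | rfl)
          exacts [⟨1, one_smul _ _⟩, ⟨-1, hneg _⟩]
        · rintro ⟨u, rfl⟩
          rcases Int.units_eq_one_or u with rfl | rfl
          exacts [.inl (one_smul _ _), .inr (hneg _)]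
      disjoint e := by
        obtain ⟨U, V, hU, hV, heU, heV, hUV⟩ := t2_separation (hfree e).symm
        refine ⟨U ∩ Neg.neg ⁻¹' V,
          (hU.inter (hV.preimage continuous_neg)).mem_nhds ⟨heU, heV⟩, ?_⟩
        rintro u ⟨_, ⟨y, hy, rfl⟩, hx⟩
        refine (Int.units_eq_one_or u).resolve_right ?_
        rintro rfl
        exact hUV.notMem_of_mem_left (hneg y ▸ hx.1) hy.2 }
  exact hfactor.isCoveringMap

end NegQuotient

lemma exists_bettiNumber_negQuotient (K : Type) [Field K] [CharP K 2] [T2Space E]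
    [ContinuousNeg E] (hfree : ∀ e : E, -e ≠ e) [HasFiniteHomology K E]
    [HasFiniteHomology K (NegQuotient E)] :
    ∃ r : ℕ → ℕ, r 0 = 0 ∧
      ∀ n, bettiNumber K E n + r n + r (n + 1) = 2 * bettiNumber K (NegQuotient E) n := by
  have h : IsDoubleCover (singularMap (NegQuotient.mk E)) (singularMap ⟨Neg.neg, continuous_neg⟩) :=
    isDoubleCover_singularMap (NegQuotient.isCoveringMap_mk hfree) NegQuotient.mk_surjective
      (ContinuousMap.ext NegQuotient.mk_neg) hfree fun _ _ ↦ NegQuotient.mk_eq_mk.1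
  obtain ⟨δ, hpδ, hδt, htp, hp⟩ := exists_connecting_map (h.shortExact_transfer K)
  exact exists_rank_of_exact hpδ hδt htp hp

end NegQuotients

/-- A homotopy equivalence through odd maps and homotopies. -/
structure OddHomotopyEquiv (E E' : Type) [TopologicalSpace E] [Neg E] [TopologicalSpace E']
    [Neg E'] where
  /-- The forward map. -/
  toFun : C(E, E')
  /-- The backward map. -/
  invFun : C(E', E)
  odd_toFun : Function.Odd toFun
  odd_invFun : Function.Odd invFun
  left_inv : (invFun.comp toFun).HomotopicWith (.id E) fun f ↦ Function.Odd f
  right_inv : (toFun.comp invFun).HomotopicWith (.id E') fun f ↦ Function.Odd f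

namespace OddHomotopyEquiv

section

variable {E E' X X' : Type} [TopologicalSpace E] [Neg E] [TopologicalSpace E'] [Neg E']
  [TopologicalSpace X] [Neg X] [TopologicalSpace X'] [Neg X']

/-- An odd homeomorphism is an odd homotopy equivalence. -/
def ofHomeomorph (e : E ≃ₜ E') (he : Function.Odd e) : OddHomotopyEquiv E E' where
  toFun := e
  invFun := e.symm
  odd_toFun := he
  odd_invFun x := e.injective <| (e.apply_symm_apply (-x)).trans <|
    ((he _).trans (congrArg Neg.neg (e.apply_symm_apply x))).symm
  left_inv := by
    rw [e.symm_comp_toContinuousMap]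
    exact .refl _ fun _ ↦ rfl
  right_inv := by
    rw [e.toContinuousMap_comp_symm]
    exact .refl _ fun _ ↦ rfl

lemma homotopicWith_prodMap {f g : C(E, E')} {f' g' : C(X, X')}
    (h : f.HomotopicWith g fun f ↦ Function.Odd f)
    (h' : f'.HomotopicWith g' fun f ↦ Function.Odd f) :
    (f.prodMap f').HomotopicWith (g.prodMap g') fun f ↦ Function.Odd f := by
  obtain ⟨H⟩ := h
  obtain ⟨H'⟩ := h'
  exact ⟨⟨H.toHomotopy.prodMap H'.toHomotopy,
    fun t x ↦ Prod.ext (H.prop' t x.1) (H'.prop' t x.2)⟩⟩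

/-- The product of two odd homotopy equivalences. -/
def prodCongr (e : OddHomotopyEquiv E E') (e' : OddHomotopyEquiv X X') :
    OddHomotopyEquiv (E × X) (E' × X') where
  toFun := e.toFun.prodMap e'.toFun
  invFun := e.invFun.prodMap e'.invFun
  odd_toFun x := Prod.ext (e.odd_toFun x.1) (e'.odd_toFun x.2)
  odd_invFun x := Prod.ext (e.odd_invFun x.1) (e'.odd_invFun x.2)
  left_inv := homotopicWith_prodMap e.left_inv e'.left_inv
  right_inv := homotopicWith_prodMap e.right_inv e'.right_inv

end

section

variable {E E' : Type} [TopologicalSpace E] [InvolutiveNeg E] [ContinuousNeg E]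
  [TopologicalSpace E'] [InvolutiveNeg E'] [ContinuousNeg E']

/-- An odd homotopy equivalence descends to the antipodal quotients. -/
def negQuotient (e : OddHomotopyEquiv E E') : NegQuotient E ≃ₕ NegQuotient E' where
  toFun := NegQuotient.map e.toFun e.odd_toFun
  invFun := NegQuotient.map e.invFun e.odd_invFun
  left_inv := by
    rw [NegQuotient.map_comp_map, ← NegQuotient.map_id]
    exact NegQuotient.map_homotopic e.left_inv
  right_inv := by
    rw [NegQuotient.map_comp_map, ← NegQuotient.map_id]
    exact NegQuotient.map_homotopic e.right_inv

end

end OddHomotopyEquiv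

section ContractibleFactors

variable (R : Type) [Ring R] {A X Y : Type} [TopologicalSpace A] [TopologicalSpace X]
  [TopologicalSpace Y] [ContractibleSpace A]

/-- The projection away from a contractible first factor, as a homotopy equivalence. -/
noncomputable def contractibleProd (A Y : Type) [TopologicalSpace A] [TopologicalSpace Y]
    [ContractibleSpace A] : A × Y ≃ₕ Y :=
  ((ContractibleSpace.hequiv_unit A).some.prodCongr (.refl Y)).trans
    (Homeomorph.punitProd Y).toHomotopyEquiv

/-- The projection away from a contractible second factor, as a homotopy equivalence. -/
noncomputable def prodContractible (Y A : Type) [TopologicalSpace A] [TopologicalSpace Y]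
    [ContractibleSpace A] : Y × A ≃ₕ Y :=
  (Homeomorph.prodComm Y A).toHomotopyEquiv.trans (contractibleProd A Y)

lemma bijective_inducedMap_snd (n : ℕ) :
    Function.Bijective (inducedMap R (ContinuousMap.snd : C(A × Y, Y)) n) :=
  (homologyEquiv R (contractibleProd A Y) n).bijective

lemma injective_inducedMap_prodMap_id (f : C(A, X)) (n : ℕ) :
    Function.Injective (inducedMap R (f.prodMap (.id Y)) n) := by
  have h : Function.Injective
      (inducedMap R (ContinuousMap.snd.comp (f.prodMap (.id Y)) : C(A × Y, Y)) n) :=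
    (bijective_inducedMap_snd R n).1
  rw [inducedMap_comp, LinearMap.coe_comp] at h
  exact h.of_comp

lemma surjective_inducedMap_prodMap_id [Nonempty X] (f : C(X, A)) (n : ℕ) :
    Function.Surjective (inducedMap R (f.prodMap (.id Y)) n) := by
  obtain ⟨x⟩ := ‹Nonempty X›
  have hsnd : ContinuousMap.snd.comp ((f.prodMap (.id Y)).comp (.prodMk (.const Y x) (.id Y))) =
      .id Y := rfl
  have hsurj : Function.Surjective (inducedMap R (ContinuousMap.snd : C(A × Y, Y)) n ∘
      inducedMap R (f.prodMap (.id Y)) n) := by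
    intro y
    refine ⟨inducedMap R (.prodMk (.const Y x) (.id Y)) n y, ?_⟩
    have h := congrArg (inducedMap R · n) hsnd
    simp only [inducedMap_comp, inducedMap_id] at h
    exact LinearMap.congr_fun h y
  exact hsurj.of_comp_left (bijective_inducedMap_snd R n).1

end ContractibleFactors

/-- A space with its origin removed. -/
abbrev Punctured (F : Type) [Zero F] : Type := {x : F // x ≠ 0}

section Punctured

variable {F : Type} [AddCommGroup F]

instance : InvolutiveNeg (Punctured F) where
  neg x := ⟨-x.1, neg_ne_zero.2 x.2⟩
  neg_neg x := Subtype.ext (neg_neg x.1)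

lemma Punctured.neg_ne_self [IsAddTorsionFree F] (x : Punctured F) : -x ≠ x :=
  fun h ↦ x.2 (self_eq_neg.1 (congrArg Subtype.val h).symm)

variable [TopologicalSpace F]

instance [ContinuousNeg F] : ContinuousNeg (Punctured F) where
  continuous_neg := continuous_subtype_val.neg.subtype_mk _

end Punctured

section PuncturedProducts

variable (F : Type) [AddCommGroup F] [TopologicalSpace F]

/-- The product `F × ℝ` without the closed ray from the origin in the direction of `(0, -ε)`. -/
abbrev Slit (ε : ℝˣ) : Type := {p : F × ℝ // p.1 ≠ 0 ∨ 0 < ε * p.2}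

instance [ContinuousAdd F] [Module ℝ F] [ContinuousSMul ℝ F] (ε : ℝˣ) :
    ContractibleSpace (Slit F ε) := by
  have hε : 0 < (ε * ε : ℝ) := mul_self_pos.2 ε.ne_zero
  have hstar : StarConvex ℝ ((0, ↑ε) : F × ℝ) {p | p.1 ≠ 0 ∨ 0 < ε * p.2} := by
    rintro ⟨x, t⟩ hxt a b ha hb hab
    change x ≠ 0 ∨ 0 < ε * t at hxt
    change a • (0 : F) + b • x ≠ 0 ∨ 0 < ε * (a * ε + b * t)
    rw [smul_zero, zero_add]
    rcases hb.eq_or_lt with rfl | hb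
    · right
      nlinarith
    · refine hxt.imp (smul_ne_zero hb.ne') fun ht ↦ ?_
      nlinarith [mul_pos hb ht, mul_nonneg ha hε.le]
  exact hstar.contractibleSpace ⟨(0, ↑ε), .inr hε⟩

/-- The inclusion of a slit space. -/
def slitInclusion (ε : ℝˣ) : C(Slit F ε, Punctured (F × ℝ)) where
  toFun p := ⟨p.1, by
    rintro h
    simpa [h] using p.2⟩

/-- The inclusion of the slab `x ≠ 0` of `F × ℝ` into a slit space. -/
def slabToSlit (ε : ℝˣ) : C(Punctured F × ℝ, Slit F ε) where
  toFun p := ⟨(p.1.1, p.2), .inl p.1.2⟩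

/-- The inclusion of the slab `x ≠ 0` of `F × ℝ` into the punctured space. -/
def slabInclusion : C(Punctured F × ℝ, Punctured (F × ℝ)) where
  toFun p := ⟨(p.1.1, p.2), fun h ↦ p.1.2 (congrArg Prod.fst h)⟩

/-- The inclusion of the open upper half of `F × ℝ` into the punctured space. -/
def halfInclusion : C(F × Set.Ioi (0 : ℝ), Punctured (F × ℝ)) where
  toFun p := ⟨(p.1, p.2.1), fun h ↦ p.2.2.ne' (congrArg Prod.snd h)⟩

variable {F}

lemma isOpenEmbedding_halfInclusion [T1Space F] : IsOpenEmbedding (halfInclusion F) :=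
  .of_comp _ isOpen_ne.isOpenEmbedding_subtypeVal
    (.prodMap .id isOpen_Ioi.isOpenEmbedding_subtypeVal)

lemma isOpenEmbedding_slabInclusion [T1Space F] : IsOpenEmbedding (slabInclusion F) :=
  .of_comp _ isOpen_ne.isOpenEmbedding_subtypeVal
    (.prodMap isOpen_ne.isOpenEmbedding_subtypeVal .id)

lemma isOpenEmbedding_slitInclusion [T1Space F] (ε : ℝˣ) : IsOpenEmbedding (slitInclusion F ε) := by
  have hopen : IsOpen ({p | p.1 ≠ 0 ∨ 0 < ε * p.2} : Set (F × ℝ)) :=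
    (isOpen_ne.preimage continuous_fst).union
      (isOpen_lt continuous_const (continuous_const.mul continuous_snd))
  exact .of_comp _ isOpen_ne.isOpenEmbedding_subtypeVal hopen.isOpenEmbedding_subtypeVal

lemma isEmbedding_slabToSlit (ε : ℝˣ) : IsEmbedding (slabToSlit F ε) :=
  .of_comp (slabToSlit F ε).continuous continuous_subtype_val
    (IsEmbedding.prodMap .subtypeVal .id)

end PuncturedProducts

section PuncturedMayerVietoris

lemma mem_range_slitInclusion_prodMap {F Y : Type} [AddCommGroup F] [TopologicalSpace F]
    [TopologicalSpace Y] {ε : ℝˣ} {w : Punctured (F × ℝ) × Y} :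
    w ∈ Set.range ((slitInclusion F ε).prodMap (.id Y)) ↔ w.1.1.1 ≠ 0 ∨ 0 < ε * w.1.1.2 :=
  ⟨by rintro ⟨p, rfl⟩; exact p.1.2, fun h ↦ ⟨(⟨w.1.1, h⟩, w.2), rfl⟩⟩

lemma isMayerVietoris_slit (R : Type) [Ring R] (F Y : Type) [AddCommGroup F] [TopologicalSpace F]
    [T1Space F] [TopologicalSpace Y] :
    IsMayerVietoris (inducedMap R ((slabToSlit F 1).prodMap (.id Y)))
      (inducedMap R ((slabToSlit F (-1)).prodMap (.id Y)))
      (inducedMap R ((slitInclusion F 1).prodMap (.id Y)))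
      (inducedMap R ((slitInclusion F (-1)).prodMap (.id Y))) := by
  refine isMayerVietoris_singular rfl ((isEmbedding_slabToSlit 1).prodMap .id)
    ((isOpenEmbedding_slitInclusion 1).prodMap .id)
    ((isOpenEmbedding_slitInclusion (-1)).prodMap .id) ?_ ?_
  · refine Set.eq_univ_of_forall fun ⟨⟨⟨x, t⟩, hp⟩, y⟩ ↦ ?_
    simp only [Set.mem_union, mem_range_slitInclusion_prodMap, Units.val_neg, Units.val_one]
    by_cases hx : x = 0
    · have ht : t ≠ 0 := fun ht ↦ hp (Prod.ext hx ht)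
      exact ht.gt_or_lt.imp (fun ht ↦ .inr (by linarith)) fun ht ↦ .inr (by linarith)
    · exact .inl (.inl hx)
  · rintro ⟨⟨⟨x, t⟩, hp⟩, y⟩ hw
    simp only [Set.mem_inter_iff, mem_range_slitInclusion_prodMap, Units.val_neg,
      Units.val_one] at hw
    have hx : x ≠ 0 := by
      rintro rfl
      have h₁ := hw.1.neg_resolve_left rfl
      have h₂ := hw.2.neg_resolve_left rfl
      linarith
    exact ⟨((⟨x, hx⟩, t), y), rfl⟩

lemma bijective_coprod_slitInclusion (R : Type) [Ring R] (F Y : Type) [AddCommGroup F]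
    [TopologicalSpace F] [T1Space F] [TopologicalSpace Y] [Subsingleton F] (n : ℕ) :
    Function.Bijective ((inducedMap R ((slitInclusion F 1).prodMap (.id Y)) n).coprod
      (inducedMap R ((slitInclusion F (-1)).prodMap (.id Y)) n)) :=
  have : IsEmpty (Punctured F) := ⟨fun x ↦ x.2 (Subsingleton.elim _ _)⟩
  (isMayerVietoris_slit R F Y).bijective_coprod n

end PuncturedMayerVietoris

section PuncturedBettiNumbers

variable (K : Type) [Field K] (F Y : Type) [AddCommGroup F] [TopologicalSpace F] [ContinuousAdd F]
  [Module ℝ F] [ContinuousSMul ℝ F] [TopologicalSpace Y]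

/-- The slab over a punctured space retracts onto the punctured space. -/
noncomputable def slabProdEquiv (F Y : Type) [AddCommGroup F] [TopologicalSpace F]
    [TopologicalSpace Y] : (Punctured F × ℝ) × Y ≃ₕ Punctured F × Y :=
  (prodContractible (Punctured F) ℝ).prodCongr (.refl Y)

lemma surjective_inducedMap_slabToSlit [Nontrivial F] (ε : ℝˣ) (n : ℕ) :
    Function.Surjective (inducedMap K ((slabToSlit F ε).prodMap (.id Y)) n) :=
  have : Nonempty (Punctured F) := nonempty_subtype.2 (exists_ne 0)
  surjective_inducedMap_prodMap_id K _ n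

instance hasFiniteHomology_slit [HasFiniteHomology K Y] (ε : ℝˣ) :
    HasFiniteHomology K (Slit F ε × Y) :=
  .of_homotopyEquiv K (contractibleProd (Slit F ε) Y)

variable [T1Space F]

lemma bettiNumber_zero_punctured_prod_real [Nontrivial F] :
    bettiNumber K (Punctured (F × ℝ) × Y) 0 = bettiNumber K Y 0 :=
  ((isMayerVietoris_slit K F Y).finrank_zero_eq (surjective_inducedMap_slabToSlit K F Y 1)
    (injective_inducedMap_prodMap_id K _ 0)).trans
    (bettiNumber_eq_of_homotopyEquiv K (contractibleProd _ Y) 0)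

section

variable [Nontrivial F] [HasFiniteHomology K Y] [HasFiniteHomology K (Punctured F × Y)]

lemma hasFiniteHomology_punctured_prod_real : HasFiniteHomology K (Punctured (F × ℝ) × Y) where
  finite :=
    have : HasFiniteHomology K ((Punctured F × ℝ) × Y) := .of_homotopyEquiv K (slabProdEquiv F Y)
    (isMayerVietoris_slit K F Y).finite (surjective_inducedMap_slabToSlit K F Y 1)

lemma bettiNumber_succ_punctured_prod_real (n : ℕ) :
    bettiNumber K (Punctured (F × ℝ) × Y) (n + 1) + bettiNumber K Y n =
      bettiNumber K Y (n + 1) + bettiNumber K (Punctured F × Y) n := by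
  have : HasFiniteHomology K ((Punctured F × ℝ) × Y) := .of_homotopyEquiv K (slabProdEquiv F Y)
  rw [← bettiNumber_eq_of_homotopyEquiv K (contractibleProd (Slit F 1) Y) n,
    ← bettiNumber_eq_of_homotopyEquiv K (contractibleProd (Slit F (-1)) Y) (n + 1),
    ← bettiNumber_eq_of_homotopyEquiv K (slabProdEquiv F Y) n]
  exact (isMayerVietoris_slit K F Y).finrank_succ_add_eq
    (surjective_inducedMap_slabToSlit K F Y 1) (injective_inducedMap_prodMap_id K _) n

end

section

variable [Subsingleton F] [HasFiniteHomology K Y]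

lemma hasFiniteHomology_punctured_line_prod : HasFiniteHomology K (Punctured (F × ℝ) × Y) where
  finite n := .of_surjective _ (bijective_coprod_slitInclusion K F Y n).2

lemma bettiNumber_punctured_line_prod (n : ℕ) :
    bettiNumber K (Punctured (F × ℝ) × Y) n = 2 * bettiNumber K Y n := by
  have h := (LinearEquiv.ofBijective _ (bijective_coprod_slitInclusion K F Y n)).finrank_eq
  rw [Module.finrank_prod, ← bettiNumber, ← bettiNumber, ← bettiNumber,
    bettiNumber_eq_of_homotopyEquiv K (contractibleProd _ Y),
    bettiNumber_eq_of_homotopyEquiv K (contractibleProd _ Y)] at h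
  rw [← h, two_mul]

end

end PuncturedBettiNumbers

section QuotientMayerVietoris

lemma NegQuotient.isOpenEmbedding_mk_comp {E E' : Type} [TopologicalSpace E] [TopologicalSpace E']
    [InvolutiveNeg E'] [ContinuousNeg E'] {f : C(E, E')} (hf : IsOpenEmbedding f)
    (h : ∀ x y, f x ≠ -f y) : IsOpenEmbedding ((mk E').comp f) :=
  .of_continuous_injective_isOpenMap ((mk E').comp f).continuous
    (fun x y hxy ↦ hf.injective ((mk_eq_mk.1 hxy).resolve_right (h x y)))
    (isOpenQuotientMap_mk.isOpenMap.comp hf.isOpenMap)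

variable (F Y : Type) [AddCommGroup F] [TopologicalSpace F] [TopologicalSpace Y] [InvolutiveNeg Y]

/-- The open upper half of `(F × ℝ) ∖ 0` embeds in the antipodal quotient. -/
def halfToQuotient : C((F × Set.Ioi (0 : ℝ)) × Y, NegQuotient (Punctured (F × ℝ) × Y)) :=
  (NegQuotient.mk _).comp ((halfInclusion F).prodMap (.id Y))

/-- The antipodal quotient of the slab embeds in that of the punctured space. -/
def slabToQuotient :
    C(NegQuotient ((Punctured F × ℝ) × Y), NegQuotient (Punctured (F × ℝ) × Y)) :=
  NegQuotient.map ((slabInclusion F).prodMap (.id Y)) fun _ ↦ rfl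

/-- The inclusion of the open upper half of the slab in the open upper half. -/
def halfSlabToHalf : C((Punctured F × Set.Ioi (0 : ℝ)) × Y, (F × Set.Ioi (0 : ℝ)) × Y) :=
  (ContinuousMap.prodMap ⟨Subtype.val, continuous_subtype_val⟩ (.id _)).prodMap (.id Y)

/-- The open upper half of the slab embeds in the antipodal quotient of the slab. -/
def halfSlabToSlabQuotient :
    C((Punctured F × Set.Ioi (0 : ℝ)) × Y, NegQuotient ((Punctured F × ℝ) × Y)) :=
  (NegQuotient.mk _).comp
    ((ContinuousMap.prodMap (.id _) ⟨Subtype.val, continuous_subtype_val⟩).prodMap (.id Y))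

variable {F Y} in
lemma mem_range_slabToQuotient {w : Punctured (F × ℝ) × Y} :
    NegQuotient.mk _ w ∈ Set.range (slabToQuotient F Y) ↔ w.1.1.1 ≠ 0 := by
  refine ⟨?_, fun hx ↦ ⟨NegQuotient.mk _ ((⟨w.1.1.1, hx⟩, w.1.1.2), w.2), rfl⟩⟩
  rintro ⟨v, hv⟩ hw
  obtain ⟨v, rfl⟩ := NegQuotient.mk_surjective v
  rcases NegQuotient.mk_eq_mk.1 hv with rfl | h
  · exact v.1.1.2 hw
  · have h : v.1.1.1 = -w.1.1.1 := congrArg (·.1.1.1) h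
    exact v.1.1.2 (h.trans (by rw [hw, neg_zero]))

lemma range_halfToQuotient_union_range_slabToQuotient :
    Set.range (halfToQuotient F Y) ∪ Set.range (slabToQuotient F Y) = Set.univ := by
  refine Set.eq_univ_of_forall (NegQuotient.mk_surjective.forall.2 fun w ↦ ?_)
  by_cases hx : w.1.1.1 = 0
  · left
    have ht : w.1.1.2 ≠ 0 := fun ht ↦ w.1.2 (Prod.ext hx ht)
    rcases ht.lt_or_gt with ht | ht
    · exact ⟨((-w.1.1.1, ⟨-w.1.1.2, neg_pos.2 ht⟩), -w.2), NegQuotient.mk_neg w⟩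
    · exact ⟨((w.1.1.1, ⟨w.1.1.2, ht⟩), w.2), rfl⟩
  · exact .inr (mem_range_slabToQuotient.2 hx)

variable [ContinuousNeg F] [ContinuousNeg Y]

lemma isOpenEmbedding_halfToQuotient [T1Space F] : IsOpenEmbedding (halfToQuotient F Y) := by
  refine NegQuotient.isOpenEmbedding_mk_comp (isOpenEmbedding_halfInclusion.prodMap .id) ?_
  rintro ⟨⟨x, t⟩, y⟩ ⟨⟨x', t'⟩, y'⟩ h
  have ht : t.1 = -t'.1 := congrArg (·.1.1.2) h
  linarith [t.2.out, t'.2.out]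

lemma isOpenEmbedding_slabToQuotient [T1Space F] : IsOpenEmbedding (slabToQuotient F Y) :=
  NegQuotient.isOpenEmbedding_map _ (isOpenEmbedding_slabInclusion.prodMap .id)

lemma isMayerVietoris_negQuotient [T1Space F] (R : Type) [Ring R] :
    IsMayerVietoris (inducedMap R (halfSlabToHalf F Y)) (inducedMap R (halfSlabToSlabQuotient F Y))
      (inducedMap R (halfToQuotient F Y)) (inducedMap R (slabToQuotient F Y)) := by
  refine isMayerVietoris_singular rfl ((IsEmbedding.prodMap .subtypeVal .id).prodMap .id)
    (isOpenEmbedding_halfToQuotient F Y) (isOpenEmbedding_slabToQuotient F Y)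
    (range_halfToQuotient_union_range_slabToQuotient F Y) ?_
  rintro _ ⟨⟨w, rfl⟩, hw⟩
  exact ⟨((⟨w.1.1, mem_range_slabToQuotient.1 hw⟩, w.1.2), w.2), rfl⟩

end QuotientMayerVietoris

section QuotientBettiNumbers

variable (K : Type) [Field K] (F Y : Type) [AddCommGroup F] [TopologicalSpace F]
  [TopologicalSpace Y]

instance : ContractibleSpace (Set.Ioi (0 : ℝ)) :=
  (convex_Ioi 0).contractibleSpace ⟨1, zero_lt_one' ℝ⟩

/-- A half-slab retracts onto the punctured space. -/
noncomputable def halfSlabProdEquiv :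
    (Punctured F × Set.Ioi (0 : ℝ)) × Y ≃ₕ Punctured F × Y :=
  (prodContractible (Punctured F) _).prodCongr (.refl Y)

/-- The projection away from a real factor, as an odd homotopy equivalence. -/
def OddHomotopyEquiv.prodReal (X : Type) [TopologicalSpace X] [Neg X] :
    OddHomotopyEquiv (X × ℝ) X where
  toFun := .fst
  invFun := .prodMk (.id X) (.const X 0)
  odd_toFun _ := rfl
  odd_invFun _ := Prod.ext rfl neg_zero.symm
  left_inv := ⟨{
    toFun q := (q.2.1, q.1 * q.2.2)
    map_zero_left x := Prod.ext rfl (zero_mul x.2)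
    map_one_left x := Prod.ext rfl (one_mul x.2)
    prop' t x := Prod.ext rfl (mul_neg t.1 x.2) }⟩
  right_inv := .refl _ fun _ ↦ rfl

/-- The antipodal quotient of the slab retracts onto that of the punctured space. -/
def slabQuotientEquiv [ContinuousNeg F] [InvolutiveNeg Y] [ContinuousNeg Y] :
    NegQuotient ((Punctured F × ℝ) × Y) ≃ₕ NegQuotient (Punctured F × Y) :=
  ((OddHomotopyEquiv.prodReal (Punctured F)).prodCongr
    (.ofHomeomorph (.refl Y) fun _ ↦ rfl)).negQuotient

variable [IsTopologicalAddGroup F] [Module ℝ F] [ContinuousSMul ℝ F]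

lemma surjective_inducedMap_halfSlabToHalf [Nontrivial F] (n : ℕ) :
    Function.Surjective (inducedMap K (halfSlabToHalf F Y) n) :=
  have : Nonempty (Punctured F) := nonempty_subtype.2 (exists_ne 0)
  surjective_inducedMap_prodMap_id K _ n

variable [T1Space F] [InvolutiveNeg Y] [ContinuousNeg Y]

/-- The antipodal quotient of a punctured line times `Y` is `Y` up to homotopy. -/
noncomputable def negQuotientPuncturedLineEquiv [Subsingleton F] :
    NegQuotient (Punctured (F × ℝ) × Y) ≃ₕ Y :=
  have hsurj : Function.Surjective (halfToQuotient F Y) := fun w ↦ by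
    have hw := (range_halfToQuotient_union_range_slabToQuotient F Y).ge (Set.mem_univ w)
    refine hw.resolve_right ?_
    obtain ⟨w, rfl⟩ := NegQuotient.mk_surjective w
    exact fun h ↦ mem_range_slabToQuotient.1 h (Subsingleton.elim _ _)
  ((isOpenEmbedding_halfToQuotient F Y).isEmbedding.toHomeomorphOfSurjective
    hsurj).symm.toHomotopyEquiv.trans (contractibleProd (F × Set.Ioi (0 : ℝ)) Y)

variable [Nontrivial F] [HasFiniteHomology K (NegQuotient (Punctured F × Y))]

lemma bettiNumber_zero_negQuotient_le :
    bettiNumber K (NegQuotient (Punctured (F × ℝ) × Y)) 0 ≤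
      bettiNumber K (NegQuotient (Punctured F × Y)) 0 := by
  have : HasFiniteHomology K (NegQuotient ((Punctured F × ℝ) × Y)) :=
    .of_homotopyEquiv K (slabQuotientEquiv F Y)
  rw [← bettiNumber_eq_of_homotopyEquiv K (slabQuotientEquiv F Y)]
  exact (isMayerVietoris_negQuotient F Y K).finrank_zero_le
    (surjective_inducedMap_halfSlabToHalf K F Y)

variable [HasFiniteHomology K (Punctured F × Y)]

lemma hasFiniteHomology_negQuotient_prod_real :
    HasFiniteHomology K (NegQuotient (Punctured (F × ℝ) × Y)) where
  finite :=
    have : HasFiniteHomology K ((Punctured F × Set.Ioi (0 : ℝ)) × Y) :=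
      .of_homotopyEquiv K (halfSlabProdEquiv F Y)
    have : HasFiniteHomology K (NegQuotient ((Punctured F × ℝ) × Y)) :=
      .of_homotopyEquiv K (slabQuotientEquiv F Y)
    (isMayerVietoris_negQuotient F Y K).finite (surjective_inducedMap_halfSlabToHalf K F Y)

lemma bettiNumber_succ_negQuotient_add_le (n : ℕ) :
    bettiNumber K (NegQuotient (Punctured (F × ℝ) × Y)) (n + 1) + bettiNumber K Y n ≤
      bettiNumber K (NegQuotient (Punctured F × Y)) (n + 1) +
        bettiNumber K (Punctured F × Y) n := by
  have : HasFiniteHomology K ((Punctured F × Set.Ioi (0 : ℝ)) × Y) :=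
    .of_homotopyEquiv K (halfSlabProdEquiv F Y)
  have : HasFiniteHomology K (NegQuotient ((Punctured F × ℝ) × Y)) :=
    .of_homotopyEquiv K (slabQuotientEquiv F Y)
  rw [← bettiNumber_eq_of_homotopyEquiv K (slabQuotientEquiv F Y),
    ← bettiNumber_eq_of_homotopyEquiv K (halfSlabProdEquiv F Y),
    ← bettiNumber_eq_of_homotopyEquiv K (contractibleProd (F × Set.Ioi (0 : ℝ)) Y)]
  exact (isMayerVietoris_negQuotient F Y K).finrank_succ_add_le
    (surjective_inducedMap_halfSlabToHalf K F Y) n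

end QuotientBettiNumbers

section Euclidean

section

variable {F F' : Type} [AddCommGroup F] [TopologicalSpace F] [Module ℝ F] [AddCommGroup F']
  [TopologicalSpace F'] [Module ℝ F']

/-- A linear isomorphism, restricted to the complements of the origin. -/
def puncturedHomeomorph (e : F ≃L[ℝ] F') : Punctured F ≃ₜ Punctured F' :=
  e.toHomeomorph.subtype fun _ ↦ (map_ne_zero_iff e e.injective).symm

lemma odd_puncturedHomeomorph (e : F ≃L[ℝ] F') : Function.Odd (puncturedHomeomorph e) :=
  fun x ↦ Subtype.ext (map_neg e x.1)

end

/-- Splitting off the last coordinate, with the origin removed. -/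
noncomputable def puncturedSplit (k : ℕ) :
    Punctured (EuclideanSpace ℝ (Fin (k + 1))) ≃ₜ Punctured (EuclideanSpace ℝ (Fin k) × ℝ) :=
  puncturedHomeomorph (.ofFinrankEq (by simp))

variable (K : Type) [Field K] (Y : Type) [TopologicalSpace Y]

/-- Splitting off the last coordinate, in a product. -/
noncomputable def puncturedSplitProd (k : ℕ) : Punctured (EuclideanSpace ℝ (Fin (k + 1))) × Y ≃ₕ
    Punctured (EuclideanSpace ℝ (Fin k) × ℝ) × Y :=
  ((puncturedSplit k).prodCongr (.refl Y)).toHomotopyEquiv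

variable [HasFiniteHomology K Y]

instance hasFiniteHomology_punctured_euclidean_prod (k : ℕ) :
    HasFiniteHomology K (Punctured (EuclideanSpace ℝ (Fin (k + 1))) × Y) := by
  induction k with
  | zero =>
    have := hasFiniteHomology_punctured_line_prod K (EuclideanSpace ℝ (Fin 0)) Y
    exact .of_homotopyEquiv K (puncturedSplitProd Y 0)
  | succ k ih =>
    have := hasFiniteHomology_punctured_prod_real K (EuclideanSpace ℝ (Fin (k + 1))) Y
    exact .of_homotopyEquiv K (puncturedSplitProd Y (k + 1))

lemma bettiNumber_punctured_euclidean_prod (k i : ℕ) :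
    bettiNumber K (Punctured (EuclideanSpace ℝ (Fin (k + 1))) × Y) i =
      bettiNumber K Y i + if k ≤ i then bettiNumber K Y (i - k) else 0 := by
  rw [bettiNumber_eq_of_homotopyEquiv K (puncturedSplitProd Y k)]
  induction k generalizing i with
  | zero => simp [bettiNumber_punctured_line_prod, two_mul]
  | succ k ih =>
    cases i with
    | zero => simp [bettiNumber_zero_punctured_prod_real]
    | succ n =>
      have h := bettiNumber_succ_punctured_prod_real K (EuclideanSpace ℝ (Fin (k + 1))) Y n
      rw [bettiNumber_eq_of_homotopyEquiv K (puncturedSplitProd Y k), ih] at h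
      rw [Nat.add_sub_add_right]
      simp only [Nat.add_le_add_iff_right]
      linarith

variable [InvolutiveNeg Y] [ContinuousNeg Y]

/-- Splitting off the last coordinate, in an antipodal quotient. -/
noncomputable def negQuotientSplit (k : ℕ) :
    NegQuotient (Punctured (EuclideanSpace ℝ (Fin (k + 1))) × Y) ≃ₕ
      NegQuotient (Punctured (EuclideanSpace ℝ (Fin k) × ℝ) × Y) :=
  ((OddHomotopyEquiv.ofHomeomorph (puncturedSplit k) (odd_puncturedHomeomorph _)).prodCongr
    (.ofHomeomorph (.refl Y) fun _ ↦ rfl)).negQuotient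

instance hasFiniteHomology_negQuotient_punctured_euclidean_prod (k : ℕ) :
    HasFiniteHomology K (NegQuotient (Punctured (EuclideanSpace ℝ (Fin (k + 1))) × Y)) := by
  induction k with
  | zero =>
    exact .of_homotopyEquiv K ((negQuotientSplit Y 0).trans (negQuotientPuncturedLineEquiv _ Y))
  | succ k ih =>
    have := hasFiniteHomology_negQuotient_prod_real K (EuclideanSpace ℝ (Fin (k + 1))) Y
    exact .of_homotopyEquiv K (negQuotientSplit Y (k + 1))

lemma bettiNumber_negQuotient_punctured_euclidean_prod_le (k i : ℕ) :
    bettiNumber K (NegQuotient (Punctured (EuclideanSpace ℝ (Fin (k + 1))) × Y)) i ≤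
      ∑ j ∈ Finset.range (k + 1), if j ≤ i then bettiNumber K Y (i - j) else 0 := by
  rw [bettiNumber_eq_of_homotopyEquiv K (negQuotientSplit Y k)]
  induction k generalizing i with
  | zero => simp [bettiNumber_eq_of_homotopyEquiv K (negQuotientPuncturedLineEquiv _ Y)]
  | succ k ih =>
    rw [Finset.sum_range_succ]
    simp only [← bettiNumber_eq_of_homotopyEquiv K (negQuotientSplit Y k)] at ih
    cases i with
    | zero => exact (bettiNumber_zero_negQuotient_le K _ Y).trans ((ih 0).trans le_self_add)
    | succ n =>
      have h := bettiNumber_succ_negQuotient_add_le K (EuclideanSpace ℝ (Fin (k + 1))) Y n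
      rw [bettiNumber_punctured_euclidean_prod] at h
      rw [Nat.add_sub_add_right]
      simp only [Nat.add_le_add_iff_right]
      linarith [ih (n + 1)]

end Euclidean

section Numerics

/-- The Betti numbers of the sphere of dimension `l`. -/
def sphereBetti (l i : ℕ) : ℕ := (if i = 0 then 1 else 0) + if i = l then 1 else 0

/-- The Betti numbers modulo `2` of `S^{k,l}` for `k ≤ l`. -/
def sklBetti (k l i : ℕ) : ℕ := (if i ≤ k then 1 else 0) + if l ≤ i ∧ i ≤ k + l then 1 else 0

lemma sklBetti_eq_zero {k l i : ℕ} (hi : k + l < i) : sklBetti k l i = 0 := by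
  rw [sklBetti, if_neg (by lia), if_neg (by lia)]

lemma sum_shift_sphereBetti (k l i : ℕ) :
    (∑ j ∈ Finset.range (k + 1), if j ≤ i then sphereBetti l (i - j) else 0) =
      sklBetti k l i := by
  induction k with
  | zero =>
    rw [zero_add, Finset.sum_range_one, sphereBetti, sklBetti]
    split_ifs <;> lia
  | succ k ih =>
    rw [Finset.sum_range_succ, ih, sphereBetti, sklBetti, sklBetti]
    split_ifs <;> lia

/-- The ranks of the cup products with the class of the double cover `S^k × S^l → S^{k,l}`. -/
def gysinRank (k l i : ℕ) : ℕ :=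
  (if 1 ≤ i ∧ i ≤ k then 1 else 0) + if l + 1 ≤ i ∧ i ≤ k + l then 1 else 0

lemma gysinRank_le_one {k l : ℕ} (hkl : k ≤ l) (i : ℕ) : gysinRank k l i ≤ 1 := by
  rw [gysinRank]
  split_ifs <;> lia

lemma endpoints_add_halfOpen_intervals (a k i : ℕ) :
    (if i = a then 1 else 0) + (if k ≤ i ∧ i - k = a then 1 else 0) +
      (if a + 1 ≤ i ∧ i ≤ k + a then 1 else 0) + (if a ≤ i ∧ i + 1 ≤ k + a then 1 else 0) =
    2 * if a ≤ i ∧ i ≤ k + a then 1 else 0 := by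
  split_ifs <;> lia

lemma sphereBetti_add_gysinRank (k l i : ℕ) :
    (sphereBetti l i + if k ≤ i then sphereBetti l (i - k) else 0) + gysinRank k l i +
      gysinRank k l (i + 1) = 2 * sklBetti k l i := by
  have h₀ := endpoints_add_halfOpen_intervals 0 k i
  have hl := endpoints_add_halfOpen_intervals l k i
  simp only [ite_and, zero_add, add_zero, Nat.zero_le, if_true] at h₀ hl
  simp only [sphereBetti, gysinRank, sklBetti, ite_add_zero, ite_and, Nat.add_le_add_iff_right,
    Nat.le_add_left, if_true]
  lia

lemma eq_sklBetti_of_gysin {k l : ℕ} (hkl : k ≤ l) {b r : ℕ → ℕ} (hr₀ : r 0 = 0)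
    (hgysin : ∀ i, (sphereBetti l i + if k ≤ i then sphereBetti l (i - k) else 0) + r i +
      r (i + 1) = 2 * b i)
    (hb : ∀ i, b i ≤ sklBetti k l i) (i : ℕ) : b i = sklBetti k l i := by
  have hstep (i : ℕ) (hri : r i = gysinRank k l i) :
      r (i + 1) = gysinRank k l (i + 1) ∧ b i = sklBetti k l i := by
    -- `2 * (sklBetti k l i - b i) = gysinRank k l (i + 1) - r (i + 1) ≤ 1`
    have h := sphereBetti_add_gysinRank k l i
    have := gysinRank_le_one hkl (i + 1)
    have := hgysin i
    have := hb i
    lia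
  have hr : r i = gysinRank k l i := by
    induction i with
    | zero => simp [hr₀, gysinRank]
    | succ i ih => exact (hstep i ih).1
  exact (hstep i hr).2

lemma sum_sklBetti {k l : ℕ} :
    ∑ i ∈ Finset.range (k + l + 1), sklBetti k l i = 2 * (k + 1) := by
  have h₁ : (Finset.range (k + l + 1)).filter (· ≤ k) = Finset.range (k + 1) := by grind
  have h₂ : (Finset.range (k + l + 1)).filter (fun i ↦ l ≤ i ∧ i ≤ k + l) =
      Finset.Ico l (k + l + 1) := by
    grind
  simp only [sklBetti, Finset.sum_add_distrib, Finset.sum_boole, h₁, h₂, Finset.card_range,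
    Nat.card_Ico, Nat.cast_id]
  lia

end Numerics

section Spheres

variable (V : Type) [NormedAddCommGroup V] [NormedSpace ℝ V]

/-- The inclusion of the unit sphere into the punctured space. -/
def sphereInclusion : C(Metric.sphere (0 : V) 1, Punctured V) where
  toFun x := ⟨x, ne_zero_of_mem_unit_sphere x⟩

/-- The radial projection of the punctured space onto the unit sphere. -/
noncomputable def radialProjection : C(Punctured V, Metric.sphere (0 : V) 1) where
  toFun x := ⟨NormedSpace.normalize x.1, by simp [x.2]⟩
  continuous_toFun := by
    have h : Continuous fun x : Punctured V ↦ ‖x.1‖⁻¹ • x.1 :=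
      (continuous_subtype_val.norm.inv₀ fun x ↦ norm_ne_zero_iff.2 x.2).smul
        continuous_subtype_val
    exact h.subtype_mk _

/-- The straight-line homotopy from the radial projection to the identity. -/
noncomputable def radialHomotopy :
    ((sphereInclusion V).comp (radialProjection V)).HomotopyWith (.id (Punctured V))
      fun f ↦ Function.Odd f where
  toFun p := ⟨((1 - p.1 : ℝ) * ‖p.2.1‖⁻¹ + p.1) • p.2.1, by
    have hx := inv_pos.2 (norm_pos_iff.2 p.2.2)
    refine smul_ne_zero (ne_of_gt ?_) p.2.2
    simpa using convex_Ioi (0 : ℝ) hx (Set.mem_Ioi.2 zero_lt_one) (sub_nonneg.2 p.1.2.2) p.1.2.1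
      (by ring)⟩
  continuous_toFun := by
    refine Continuous.subtype_mk ?_ _
    fun_prop (disch := exact fun p ↦ norm_ne_zero_iff.2 p.2.2)
  map_zero_left x := Subtype.ext (by simp; rfl)
  map_one_left x := Subtype.ext (by simp)
  prop' t x := Subtype.ext <| by
    change (_ * ‖-x.1‖⁻¹ + _) • -x.1 = -((_ * ‖x.1‖⁻¹ + _) • x.1)
    rw [norm_neg, smul_neg]

/-- The unit sphere is oddly homotopy equivalent to the punctured space. -/
noncomputable def sphereEquivPunctured :
    OddHomotopyEquiv (Metric.sphere (0 : V) 1) (Punctured V) where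
  toFun := sphereInclusion V
  invFun := radialProjection V
  odd_toFun _ := rfl
  odd_invFun x := Subtype.ext (NormedSpace.normalize_neg x.1)
  left_inv := by
    have h : (radialProjection V).comp (sphereInclusion V) = .id _ :=
      ContinuousMap.ext fun x ↦ Subtype.ext <|
        NormedSpace.normalize_eq_self_of_norm_eq_one (norm_eq_of_mem_sphere x)
    rw [h]
    exact .refl _ fun _ ↦ rfl
  right_inv := ⟨radialHomotopy V⟩

end Spheres

section SphereProducts

variable (K : Type) [Field K]

/-- A product with a point. -/
def puncturedProdPUnit (l : ℕ) : Punctured (EuclideanSpace ℝ (Fin (l + 1))) × PUnit.{1} ≃ₕ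
    Punctured (EuclideanSpace ℝ (Fin (l + 1))) :=
  (Homeomorph.prodPUnit _).toHomotopyEquiv

instance hasFiniteHomology_punctured_euclidean (l : ℕ) :
    HasFiniteHomology K (Punctured (EuclideanSpace ℝ (Fin (l + 1)))) :=
  .of_homotopyEquiv K (puncturedProdPUnit l).symm

lemma bettiNumber_punctured_euclidean (l i : ℕ) :
    bettiNumber K (Punctured (EuclideanSpace ℝ (Fin (l + 1)))) i = sphereBetti l i := by
  rw [← bettiNumber_eq_of_homotopyEquiv K (puncturedProdPUnit l),
    bettiNumber_punctured_euclidean_prod, bettiNumber_of_unique, bettiNumber_of_unique,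
    sphereBetti]
  grind

-- Without this shortcut, the search for the Hausdorff property of a product times out.
instance t2Space_punctured_euclidean (l : ℕ) :
    T2Space (Punctured (EuclideanSpace ℝ (Fin (l + 1)))) :=
  inferInstance

lemma bettiNumber_negQuotient_punctured_euclidean_prod [CharP K 2] {k l : ℕ} (hkl : k ≤ l)
    (i : ℕ) :
    bettiNumber K (NegQuotient (Punctured (EuclideanSpace ℝ (Fin (k + 1))) ×
      Punctured (EuclideanSpace ℝ (Fin (l + 1))))) i = sklBetti k l i := by
  have := IsAddTorsionFree.of_isTorsionFree ℝ (EuclideanSpace ℝ (Fin (k + 1)))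
  obtain ⟨r, hr₀, hr⟩ := exists_bettiNumber_negQuotient K
    (E := Punctured (EuclideanSpace ℝ (Fin (k + 1))) × Punctured (EuclideanSpace ℝ (Fin (l + 1))))
    fun e he ↦ e.1.neg_ne_self (congrArg Prod.fst he)
  simp only [bettiNumber_punctured_euclidean_prod, bettiNumber_punctured_euclidean] at hr
  refine eq_sklBetti_of_gysin hkl hr₀ hr (fun i ↦ ?_) i
  rw [← sum_shift_sphereBetti]
  simpa only [bettiNumber_punctured_euclidean] using
    bettiNumber_negQuotient_punctured_euclidean_prod_le K
      (Punctured (EuclideanSpace ℝ (Fin (l + 1)))) k i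

lemma Skl_eq_negQuotient (k l : ℕ) :
    Skl k l = TopCat.of (NegQuotient (Metric.sphere (0 : EuclideanSpace ℝ (Fin (k + 1))) 1 ×
      Metric.sphere (0 : EuclideanSpace ℝ (Fin (l + 1))) 1)) :=
  congrArg (fun s ↦ TopCat.of (Quotient s)) <| Setoid.ext fun a b ↦ by
    change _ ↔ a = b ∨ a = -b
    simp [Prod.ext_iff, Subtype.ext_iff]

lemma betti_Skl {k l : ℕ} (hkl : k ≤ l) (i : ℕ) : betti (Skl k l) i = sklBetti k l i := by
  rw [Skl_eq_negQuotient, ← bettiNumber_negQuotient_punctured_euclidean_prod (ZMod 2) hkl]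
  exact bettiNumber_eq_of_homotopyEquiv (ZMod 2)
    ((sphereEquivPunctured _).prodCongr (sphereEquivPunctured _)).negQuotient i

end SphereProducts

end SingularBetti

/-- For `0 ≤ k ≤ n - k`, the sum of the `ℤ/2`-Betti numbers of
`S^{k,n-k} = (S^k × S^{n-k})/ℤ₂` equals `2(k+1)`; in particular `SB(S^{0,n}, ℤ/2) = 2`. -/
theorem sum_betti_Skl (n k : ℕ) (hk : k ≤ n - k) (hkn : k ≤ n) :
    ∑' i : ℕ, (betti (Skl k (n - k)) i : ℕ∞) = (2 * (k + 1) : ℕ∞) := by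
  simp only [SingularBetti.betti_Skl hk]
  rw [tsum_eq_sum (s := Finset.range (k + (n - k) + 1))]
  · exact_mod_cast SingularBetti.sum_sklBetti
  · intro i hi
    rw [SingularBetti.sklBetti_eq_zero (by simpa using hi), Nat.cast_zero]
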